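/- arXiv:1511.05323 — 2 statements merged into one kernel-verified Lean document; each statement's English description precedes it below -/
import Mathlib

section
/- Let θ ∈ [−π/2, −π/8), x ∈ ℂ, r > 0, and set y := r e^{iθ} and g(t) := exp( r^{4/3}·f_θ(t) − x y^{2/3} t² ) for t ∈ ℂ (principal powers of y). Then both of the following integrals are absolutely convergent and equal: ∫_{−∞}^{∞} g(s e^{−iθ/3})·e^{−iθ/3} ds = ∫_{−∞}^{∞} g( 4^{−1/3}·e^{iπ/6} + s·e^{−i(π+4θ)/6} )·e^{−i(π+4θ)/6} ds. -/
open Real MeasureTheory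

/-- The phase function `f_θ(t) = e^{4iθ/3}·(i t − t⁴)`. -/
noncomputable def f (θ : ℝ) (t : ℂ) : ℂ :=
  Complex.exp (Complex.I * (4 * (θ : ℂ) / 3)) * (Complex.I * t - t ^ 4)

open Filter Topology Polynomial Bornology

/-!
Write `p(t) = r^{4/3} f_θ(t) - x y^{2/3} t²`, a quartic polynomial with leading term
`-r^{4/3} (e^{iθ/3} t)⁴`. After multiplication by `e^{iθ/3}` the directions of the two lines have
arguments `0` and `-(π + 2θ)/6`, both in `(-π/8, π/8)`. That sector is convex and `Re z⁴ > 0` on it,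
so every direction on the chord between the two is one of decay for `exp ∘ p`. Joining the points
`T v` and `t₁ + T w` of the two lines by a segment, `Re p` is therefore at most `M - |T|` on this
segment, whose length is `O(|T|)`, and the difference of the truncated integrals, which a primitive
of `exp ∘ p` expresses through the end segments, tends to `0`.
-/

section LineIntegral

variable {E : Type*} [NormedAddCommGroup E] [NormedSpace ℂ E]

theorem norm_sub_le_of_norm_deriv_le_segment {G g : ℂ → E} {C : ℝ} {a b : ℂ}
    (hG : ∀ z, HasDerivAt G (g z) z) (hg : ∀ z ∈ segment ℝ a b, ‖g z‖ ≤ C) :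
    ‖G b - G a‖ ≤ C * ‖b - a‖ :=
  (convex_segment a b).norm_image_sub_le_of_norm_hasDerivWithin_le
    (fun z _ ↦ (hG z).hasDerivWithinAt) hg (left_mem_segment ℝ a b) (right_mem_segment ℝ a b)

theorem intervalIntegral_smul_comp_line [CompleteSpace E] {G g : ℂ → E} (hg : Continuous g)
    (hG : ∀ z, HasDerivAt G (g z) z) (a v : ℂ) (x y : ℝ) :
    ∫ s in x..y, v • g (a + s * v) = G (a + y * v) - G (a + x * v) := by
  refine intervalIntegral.integral_eq_sub_of_hasDerivAt (f := fun s : ℝ ↦ G (a + s * v))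
    (fun s _ ↦ ?_) (Continuous.intervalIntegrable (by fun_prop) _ _)
  have hline : HasDerivAt (fun s : ℝ ↦ a + (s : ℂ) * v) v s := by
    simpa using ((Complex.ofRealCLM.hasDerivAt (x := s)).mul_const v).const_add a
  exact (hG _).scomp s hline

theorem integral_smul_comp_line_eq_of_norm_le_segment [CompleteSpace E] {g : ℂ → E}
    (hg : Differentiable ℂ g) {a b v w : ℂ} {ψ : ℝ → ℝ}
    (hv : Integrable fun s : ℝ ↦ v • g (a + s * v))
    (hw : Integrable fun s : ℝ ↦ w • g (b + s * w))
    (hbound : ∀ T : ℝ, ∀ z ∈ segment ℝ (a + T * v) (b + T * w), ‖g z‖ ≤ ψ T)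
    (hψ : Tendsto (fun T : ℝ ↦ ψ T * ‖b + T * w - (a + T * v)‖) (cocompact ℝ) (𝓝 0)) :
    ∫ s : ℝ, v • g (a + s * v) = ∫ s : ℝ, w • g (b + s * w) := by
  obtain ⟨G, hG⟩ := hg.isExactOn_univ
  replace hG z : HasDerivAt G (g z) z := hG z trivial
  have hends : Tendsto (fun T : ℝ ↦ G (b + T * w) - G (a + T * v)) (cocompact ℝ) (𝓝 0) :=
    squeeze_zero_norm (fun T ↦ norm_sub_le_of_norm_deriv_le_segment hG (hbound T)) hψ
  have htrunc (T : ℝ) : (∫ s in (-T)..T, w • g (b + s * w)) - ∫ s in (-T)..T, v • g (a + s * v) =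
      (G (b + T * w) - G (a + T * v)) - (G (b + (-T : ℝ) * w) - G (a + (-T : ℝ) * v)) := by
    rw [intervalIntegral_smul_comp_line hg.continuous hG,
      intervalIntegral_smul_comp_line hg.continuous hG]
    abel
  have hzero : Tendsto (fun T : ℝ ↦ (∫ s in (-T)..T, w • g (b + s * w)) -
      ∫ s in (-T)..T, v • g (a + s * v)) atTop (𝓝 0) := by
    simp only [htrunc]
    simpa using (hends.mono_left atTop_le_cocompact).sub
      ((hends.mono_left atBot_le_cocompact).comp tendsto_neg_atTop_atBot)
  have hdiff := (intervalIntegral_tendsto_integral hw tendsto_neg_atTop_atBot tendsto_id).sub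
    (intervalIntegral_tendsto_integral hv tendsto_neg_atTop_atBot tendsto_id)
  exact (sub_eq_zero.1 (tendsto_nhds_unique hdiff hzero)).symm

end LineIntegral

theorem integrable_exp_neg_abs : Integrable fun x : ℝ ↦ Real.exp (-|x|) := by
  rw [← integrableOn_univ, ← Set.Iic_union_Ioi (a := (0 : ℝ)), integrableOn_union]
  constructor
  · refine (integrableOn_exp_Iic 0).congr_fun (fun x hx ↦ ?_) measurableSet_Iic
    simp only [abs_of_nonpos (Set.mem_Iic.1 hx), neg_neg]
  · refine (integrableOn_exp_neg_Ioi 0).congr_fun (fun x hx ↦ ?_) measurableSet_Ioi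
    simp only [abs_of_pos (Set.mem_Ioi.1 hx)]

theorem tendsto_exp_neg_abs_mul_norm_add_mul_cocompact {E : Type*} [NormedAddCommGroup E]
    [NormedSpace ℝ E] (c d : E) :
    Tendsto (fun T : ℝ ↦ Real.exp (-|T|) * ‖c + T • d‖) (cocompact ℝ) (𝓝 0) := by
  have hdecay (k : ℕ) : Tendsto (fun T : ℝ ↦ |T| ^ k * Real.exp (-|T|)) (cocompact ℝ) (𝓝 0) :=
    (Real.tendsto_pow_mul_exp_neg_atTop_nhds_zero k).comp tendsto_norm_cocompact_atTop
  have hmajorant : Tendsto (fun T : ℝ ↦ ‖c‖ * (|T| ^ 0 * Real.exp (-|T|)) +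
      ‖d‖ * (|T| ^ 1 * Real.exp (-|T|))) (cocompact ℝ) (𝓝 0) := by
    simpa using ((hdecay 0).const_mul ‖c‖).add ((hdecay 1).const_mul ‖d‖)
  refine squeeze_zero (fun T ↦ by positivity) (fun T ↦ ?_) hmajorant
  calc Real.exp (-|T|) * ‖c + T • d‖ ≤ Real.exp (-|T|) * (‖c‖ + |T| * ‖d‖) := by
        gcongr
        simpa only [norm_smul, Real.norm_eq_abs] using norm_add_le c (T • d)
    _ = _ := by ring

section Polynomial

variable {p : ℂ[X]} {n : ℕ} {A W : Set ℂ}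

theorem eval_cons_zero_homogenize {R : Type*} [CommSemiring R] (p : R[X]) (n : ℕ) (x : R) :
    MvPolynomial.eval ![x, 0] (p.homogenize n) = p.coeff n * x ^ n := by
  rw [homogenize, map_sum, Finset.sum_eq_single (n, 0)]
  · simp [MvPolynomial.eval_monomial]
  · rintro ⟨k, l⟩ hkl hne
    have hl : l ≠ 0 := by
      rintro rfl
      simp_all
    simp [MvPolynomial.eval_monomial, hl]
  · simp

theorem eval_line_eq_pow_mul_eval_homogenize {K : Type*} [Field K] {p : K[X]} {n : ℕ}
    (hp : p.natDegree ≤ n) {T : K} (hT : T ≠ 0) (a w : K) :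
    p.eval (a + T * w) = T ^ n * MvPolynomial.eval ![T⁻¹ * a + w, T⁻¹] (p.homogenize n) := by
  rw [eval_homogenize hp _ (inv_ne_zero hT)]
  have hquotient : (T⁻¹ * a + w) / T⁻¹ = a + T * w := by
    field_simp
  simp only [Matrix.cons_val_zero, Matrix.cons_val_one, hquotient]
  rw [mul_left_comm, ← mul_pow, mul_inv_cancel₀ hT, one_pow, mul_one]

/- In the coordinate `h = T⁻¹` at infinity, `h ^ n * p (a + T w)` is the homogenization of `p`
evaluated at `(h a + w, h)`, which is continuous up to `h = 0`, with value `p.coeff n * w ^ n`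
there. -/
theorem eventually_cocompact_re_eval_line_lt_neg_abs (hn : Even n) (hn₀ : n ≠ 0)
    (hp : p.natDegree ≤ n) (hA : IsCompact A) (hW : IsCompact W)
    (hneg : ∀ w ∈ W, (p.coeff n * w ^ n).re < 0) :
    ∀ᶠ T : ℝ in cocompact ℝ, ∀ q ∈ A ×ˢ W, (p.eval (q.1 + T * q.2)).re < -|T| := by
  have hn₁ : 1 < n := by
    obtain ⟨k, rfl⟩ := hn
    lia
  let H (h : ℝ) (q : ℂ × ℂ) : ℝ :=
    (MvPolynomial.eval ![h * q.1 + q.2, (h : ℂ)] (p.homogenize n)).re + |h| ^ (n - 1)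
  have hHc : Continuous H.uncurry := by
    have hhom : Continuous fun q : ℝ × ℂ × ℂ ↦
        MvPolynomial.eval ![q.1 * q.2.1 + q.2.2, (q.1 : ℂ)] (p.homogenize n) :=
      (p.homogenize n).continuous_eval.comp (by fun_prop)
    exact (Complex.continuous_re.comp hhom).add (by fun_prop)
  have hH0 (q : ℂ × ℂ) (hq : q ∈ A ×ˢ W) : H 0 q < 0 := by
    simpa [H, -Complex.mul_re, eval_cons_zero_homogenize, Nat.sub_ne_zero_of_lt hn₁]
      using hneg q.2 hq.2
  have hHT (T : ℝ) (hT : T ≠ 0) (q : ℂ × ℂ) :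
      (p.eval (q.1 + T * q.2)).re + |T| = T ^ n * H T⁻¹ q := by
    have habs : |T| = T ^ n * |T⁻¹| ^ (n - 1) := by
      rw [← hn.pow_abs, abs_inv, inv_pow, ← pow_sub₀ _ (abs_ne_zero.2 hT) (n.sub_le 1),
        Nat.sub_sub_self hn₁.le, pow_one]
    rw [eval_line_eq_pow_mul_eval_homogenize hp (Complex.ofReal_ne_zero.2 hT),
      ← Complex.ofReal_pow, Complex.re_ofReal_mul, habs, ← mul_add, ← Complex.ofReal_inv]
  have hnear : ∀ᶠ h : ℝ in 𝓝 0, ∀ q ∈ A ×ˢ W, H h q < 0 :=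
    (hA.prod hW).eventually_forall_of_forall_eventually fun q hq ↦
      hHc.continuousAt.eventually_lt_const (hH0 q hq)
  rw [← Metric.cobounded_eq_cocompact]
  filter_upwards [tendsto_inv₀_cobounded.eventually hnear, eventually_ne_cobounded (0 : ℝ)]
    with T hT hT₀ q hq
  have := mul_neg_of_pos_of_neg (hn.pow_pos hT₀) (hT q hq)
  linarith [hHT T hT₀ q]

theorem exists_re_eval_line_le_sub_abs (hn : Even n) (hn₀ : n ≠ 0)
    (hp : p.natDegree ≤ n) (hA : IsCompact A) (hW : IsCompact W)
    (hneg : ∀ w ∈ W, (p.coeff n * w ^ n).re < 0) :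
    ∃ M : ℝ, ∀ a ∈ A, ∀ w ∈ W, ∀ T : ℝ, (p.eval (a + T * w)).re ≤ M - |T| := by
  obtain ⟨K, hK, hKfar⟩ := mem_cocompact.1
    (eventually_cocompact_re_eval_line_lt_neg_abs hn hn₀ hp hA hW hneg)
  obtain ⟨M, hM⟩ := (hK.prod (hA.prod hW)).exists_bound_of_continuousOn
    (f := fun q : ℝ × ℂ × ℂ ↦ (p.eval (q.2.1 + q.1 * q.2.2)).re + |q.1|) (by fun_prop)
  refine ⟨max M 0, fun a ha w hw T ↦ ?_⟩
  by_cases hT : T ∈ K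
  · have := (le_abs_self _).trans (hM (T, a, w) ⟨hT, ha, hw⟩)
    linarith [le_max_left M 0]
  · have := hKfar hT (a, w) ⟨ha, hw⟩
    linarith [le_max_right M 0]

theorem integrable_exp_eval_line (hn : Even n) (hn₀ : n ≠ 0) (hp : p.natDegree ≤ n) (a : ℂ)
    {v : ℂ} (hv : (p.coeff n * v ^ n).re < 0) :
    Integrable fun s : ℝ ↦ Complex.exp (p.eval (a + s * v)) := by
  obtain ⟨M, hM⟩ := exists_re_eval_line_le_sub_abs hn hn₀ hp (isCompact_singleton (x := a))
    (isCompact_singleton (x := v)) (by simpa using hv)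
  refine (integrable_exp_neg_abs.const_mul (Real.exp M)).mono'
    (Continuous.aestronglyMeasurable (by fun_prop)) (.of_forall fun s ↦ ?_)
  rw [Complex.norm_exp, ← Real.exp_add, ← sub_eq_add_neg]
  exact Real.exp_le_exp.2 (hM a rfl v rfl s)

theorem exists_norm_exp_eval_le_of_mem_segment (hn : Even n) (hn₀ : n ≠ 0) (hp : p.natDegree ≤ n)
    (a b : ℂ) {v w : ℂ} (hneg : ∀ z ∈ segment ℝ v w, (p.coeff n * z ^ n).re < 0) :
    ∃ M : ℝ, ∀ T : ℝ, ∀ z ∈ segment ℝ (a + T * v) (b + T * w),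
      ‖Complex.exp (p.eval z)‖ ≤ Real.exp M * Real.exp (-|T|) := by
  have hcompact (x y : ℂ) : IsCompact (segment ℝ x y) := by
    rw [segment_eq_image_lineMap]
    exact isCompact_Icc.image AffineMap.lineMap_continuous
  obtain ⟨M, hM⟩ :=
    exists_re_eval_line_le_sub_abs hn hn₀ hp (hcompact a b) (hcompact v w) hneg
  refine ⟨M, fun T z ⟨s, t, hs, ht, hst, hz⟩ ↦ ?_⟩
  have hz' : z = (s • a + t • b) + T * (s • v + t • w) := by
    simp only [← hz, Complex.real_smul]
    ring
  rw [Complex.norm_exp, ← Real.exp_add, ← sub_eq_add_neg, hz']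
  exact Real.exp_le_exp.2 (hM _ ⟨s, t, hs, ht, hst, rfl⟩ _ ⟨s, t, hs, ht, hst, rfl⟩ T)

theorem integral_exp_eval_line_eq (hn : Even n) (hn₀ : n ≠ 0) (hp : p.natDegree ≤ n)
    (a b : ℂ) {v w : ℂ} (hneg : ∀ z ∈ segment ℝ v w, (p.coeff n * z ^ n).re < 0) :
    ∫ s : ℝ, Complex.exp (p.eval (a + s * v)) * v =
      ∫ s : ℝ, Complex.exp (p.eval (b + s * w)) * w := by
  obtain ⟨M, hM⟩ := exists_norm_exp_eval_le_of_mem_segment hn hn₀ hp a b hneg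
  have hv := integrable_exp_eval_line hn hn₀ hp a (hneg v (left_mem_segment ℝ v w))
  have hw := integrable_exp_eval_line hn hn₀ hp b (hneg w (right_mem_segment ℝ v w))
  have hends : Tendsto (fun T : ℝ ↦
      Real.exp M * Real.exp (-|T|) * ‖b + T * w - (a + T * v)‖) (cocompact ℝ) (𝓝 0) := by
    have hsub (T : ℝ) : b + T * w - (a + T * v) = (b - a) + T * (w - v) := by ring
    simpa only [hsub, mul_assoc, mul_zero, Complex.real_smul] using
      (tendsto_exp_neg_abs_mul_norm_add_mul_cocompact (b - a) (w - v)).const_mul (Real.exp M)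
  have heq := integral_smul_comp_line_eq_of_norm_le_segment (g := fun z ↦ Complex.exp (p.eval z))
    (by fun_prop) (hv.smul v) (hw.smul w) hM hends
  simpa only [smul_eq_mul, mul_comm] using heq

end Polynomial

section Sector

theorem convex_setOf_mul_norm_lt_re {c : ℝ} (hc : 0 ≤ c) : Convex ℝ {z : ℂ | c * ‖z‖ < z.re} := by
  have hconvex := ((convexOn_norm (convex_univ (E := ℂ))).smul hc).sub
    (Complex.reLm.concaveOn convex_univ)
  simpa using hconvex.convex_lt 0

theorem re_pow_pos_of_cos_mul_norm_lt_re {n : ℕ} {z : ℂ}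
    (hz : Real.cos (π / (2 * n)) * ‖z‖ < z.re) : 0 < (z ^ n).re := by
  rcases eq_or_ne n 0 with rfl | hn
  · simp
  have hz₀ : z ≠ 0 := by
    rintro rfl
    simp at hz
  have hn' : (0 : ℝ) < n := by positivity
  have hcos : Real.cos (π / (2 * n)) < Real.cos |z.arg| := by
    rwa [Real.cos_abs, Complex.cos_arg hz₀, lt_div_iff₀ (norm_pos_iff.2 hz₀)]
  have harg : |z.arg| < π / (2 * n) := by
    by_contra! h
    exact hcos.not_ge
      (Real.cos_le_cos_of_nonneg_of_le_pi (by positivity) (Complex.abs_arg_le_pi z) h)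
  have hpow : (z ^ n).re = ‖z‖ ^ n * Real.cos (n * z.arg) := by
    conv_lhs => rw [← Complex.norm_mul_exp_arg_mul_I z]
    rw [mul_pow, ← Complex.exp_nat_mul, ← mul_assoc, ← Complex.ofReal_pow, Complex.re_ofReal_mul,
      ← Complex.ofReal_natCast, ← Complex.ofReal_mul, Complex.exp_ofReal_mul_I_re]
  rw [hpow]
  refine mul_pos (by positivity) (Real.cos_pos_of_mem_Ioo (abs_lt.1 ?_))
  rw [abs_mul, Nat.abs_cast]
  calc n * |z.arg| < n * (π / (2 * n)) := mul_lt_mul_of_pos_left harg hn'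
    _ = π / 2 := by field_simp

theorem re_pow_pos_of_mem_segment {n : ℕ} (hn : n ≠ 0) {u v z : ℂ}
    (hu : Real.cos (π / (2 * n)) * ‖u‖ < u.re) (hv : Real.cos (π / (2 * n)) * ‖v‖ < v.re)
    (hz : z ∈ segment ℝ u v) : 0 < (z ^ n).re := by
  have hn' : (1 : ℝ) ≤ n := by exact_mod_cast Nat.one_le_iff_ne_zero.2 hn
  have hangle : π / (2 * n) ≤ π / 2 := by
    gcongr
    linarith
  have hcos : 0 ≤ Real.cos (π / (2 * n)) :=
    Real.cos_nonneg_of_neg_pi_div_two_le_of_le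
      (by linarith [pi_pos, show 0 ≤ π / (2 * n) by positivity]) hangle
  exact re_pow_pos_of_cos_mul_norm_lt_re
    ((convex_setOf_mul_norm_lt_re hcos).segment_subset hu hv hz)

end Sector

section Pearcey

/-- The exponent `c f_θ(t) - B t²` of the Pearcey integrand, as a polynomial in `t`; the paper has
`c = r^{4/3}` and `B = x y^{2/3}`. -/
noncomputable def pearceyPolynomial (θ : ℝ) (c B : ℂ) : ℂ[X] :=
  C (c * Complex.exp (Complex.I * (4 * (θ : ℂ) / 3))) * (C Complex.I * X - X ^ 4) - C B * X ^ 2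

theorem eval_pearceyPolynomial (θ : ℝ) (c B t : ℂ) :
    (pearceyPolynomial θ c B).eval t = c * f θ t - B * t ^ 2 := by
  simp only [pearceyPolynomial, f, eval_sub, eval_mul, eval_C, eval_X, eval_pow]
  ring

theorem natDegree_pearceyPolynomial_le (θ : ℝ) (c B : ℂ) :
    (pearceyPolynomial θ c B).natDegree ≤ 4 := by
  unfold pearceyPolynomial
  compute_degree

theorem coeff_four_pearceyPolynomial (θ : ℝ) (c B : ℂ) :
    (pearceyPolynomial θ c B).coeff 4 = -(c * Complex.exp (Complex.I * (4 * (θ : ℂ) / 3))) := by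
  simp [pearceyPolynomial, mul_assoc, coeff_X_pow]

variable {θ : ℝ}

theorem re_exp_mul_pow_four_pos_of_mem_segment (hθ : θ ∈ Set.Ioo (-(7 * π / 8)) (-(π / 8))) {z : ℂ}
    (hz : z ∈ segment ℝ (Complex.exp (-Complex.I * ((θ : ℂ) / 3)))
      (Complex.exp (-Complex.I * (((π : ℂ) + 4 * (θ : ℂ)) / 6)))) :
    0 < (Complex.exp (Complex.I * (4 * (θ : ℂ) / 3)) * z ^ 4).re := by
  set ω : ℂ := Complex.exp (Complex.I * (θ / 3)) with hω
  have hω₁ : ω * Complex.exp (-Complex.I * ((θ : ℂ) / 3)) = 1 := by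
    rw [hω, ← Complex.exp_add]
    simp
  have hω₂ : ω * Complex.exp (-Complex.I * (((π : ℂ) + 4 * (θ : ℂ)) / 6)) =
      Complex.exp ((-(π / 6 + θ / 3) : ℝ) * Complex.I) := by
    rw [hω, ← Complex.exp_add]
    push_cast
    ring_nf
  have hωz : ω * z ∈ segment ℝ 1 (Complex.exp ((-(π / 6 + θ / 3) : ℝ) * Complex.I)) := by
    rw [← hω₁, ← hω₂]
    obtain ⟨s, t, hs, ht, hst, rfl⟩ := hz
    exact ⟨s, t, hs, ht, hst, by simp only [mul_add, mul_smul_comm]⟩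
  have hpow : Complex.exp (Complex.I * (4 * (θ : ℂ) / 3)) * z ^ 4 = (ω * z) ^ 4 := by
    rw [mul_pow, hω, ← Complex.exp_nat_mul]
    push_cast
    ring_nf
  have hcos₁ : Real.cos (π / 8) < 1 := by
    rw [← Real.cos_zero]
    exact Real.cos_lt_cos_of_nonneg_of_le_pi le_rfl (by linarith [pi_pos]) (by positivity)
  have hcos₂ : Real.cos (π / 8) < Real.cos (π / 6 + θ / 3) := by
    rw [← Real.cos_abs (π / 6 + θ / 3)]
    refine Real.cos_lt_cos_of_nonneg_of_le_pi (abs_nonneg _) (by linarith [pi_pos]) ?_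
    rw [abs_lt]
    constructor <;> linarith [hθ.1, hθ.2]
  have hhalf : π / (2 * (4 : ℕ)) = π / 8 := by norm_num
  rw [hpow]
  refine re_pow_pos_of_mem_segment four_ne_zero ?_ ?_ hωz
  · rwa [hhalf, norm_one, mul_one, Complex.one_re]
  · rwa [hhalf, Complex.norm_exp_ofReal_mul_I, mul_one, Complex.exp_ofReal_mul_I_re, Real.cos_neg]

theorem re_coeff_four_pearceyPolynomial_mul_pow_neg
    (hθ : θ ∈ Set.Ioo (-(7 * π / 8)) (-(π / 8))) {c : ℝ} (hc : 0 < c) (B : ℂ) {z : ℂ}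
    (hz : z ∈ segment ℝ (Complex.exp (-Complex.I * ((θ : ℂ) / 3)))
      (Complex.exp (-Complex.I * (((π : ℂ) + 4 * (θ : ℂ)) / 6)))) :
    ((pearceyPolynomial θ c B).coeff 4 * z ^ 4).re < 0 := by
  rw [coeff_four_pearceyPolynomial, neg_mul, Complex.neg_re, neg_lt_zero, mul_assoc,
    Complex.re_ofReal_mul]
  exact mul_pos hc (re_exp_mul_pow_four_pos_of_mem_segment hθ hz)

end Pearcey

theorem pearcey_path_deformation_case1_general (θ : ℝ) (hθ : θ ∈ Set.Ioo (-(7 * π / 8)) (-(π / 8)))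
    (x : ℂ) (r : ℝ) (hr : 0 < r) :
    let y : ℂ := (r : ℂ) * Complex.exp (Complex.I * (θ : ℂ))
    let g : ℂ → ℂ := fun t =>
      Complex.exp ((r : ℂ) ^ ((4 : ℂ) / 3) * f θ t - x * y ^ ((2 : ℂ) / 3) * t ^ 2)
    (Integrable fun s : ℝ =>
        g ((s : ℂ) * Complex.exp (-Complex.I * ((θ : ℂ) / 3))) *
          Complex.exp (-Complex.I * ((θ : ℂ) / 3))) ∧
    (Integrable fun s : ℝ =>
        g ((4 : ℂ) ^ (-(1 : ℂ) / 3) * Complex.exp (Complex.I * ((π : ℂ) / 6)) +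
            (s : ℂ) * Complex.exp (-Complex.I * (((π : ℂ) + 4 * (θ : ℂ)) / 6))) *
          Complex.exp (-Complex.I * (((π : ℂ) + 4 * (θ : ℂ)) / 6))) ∧
    (∫ s : ℝ,
        g ((s : ℂ) * Complex.exp (-Complex.I * ((θ : ℂ) / 3))) *
          Complex.exp (-Complex.I * ((θ : ℂ) / 3))) =
      ∫ s : ℝ,
        g ((4 : ℂ) ^ (-(1 : ℂ) / 3) * Complex.exp (Complex.I * ((π : ℂ) / 6)) +
            (s : ℂ) * Complex.exp (-Complex.I * (((π : ℂ) + 4 * (θ : ℂ)) / 6))) *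
          Complex.exp (-Complex.I * (((π : ℂ) + 4 * (θ : ℂ)) / 6)) := by
  intro y g
  obtain ⟨c, hc, hrc⟩ : ∃ c : ℝ, 0 < c ∧ (r : ℂ) ^ ((4 : ℂ) / 3) = c :=
    ⟨r ^ ((4 : ℝ) / 3), Real.rpow_pos_of_pos hr _, by
      simp [Complex.ofReal_cpow hr.le]⟩
  set v := Complex.exp (-Complex.I * ((θ : ℂ) / 3))
  set w := Complex.exp (-Complex.I * (((π : ℂ) + 4 * (θ : ℂ)) / 6))
  let p := pearceyPolynomial θ c (x * y ^ ((2 : ℂ) / 3))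
  have hg (t : ℂ) : g t = Complex.exp (p.eval t) := by
    simp only [g, p, eval_pearceyPolynomial, hrc]
  have hp : p.natDegree ≤ 4 := natDegree_pearceyPolynomial_le _ _ _
  have hneg : ∀ z ∈ segment ℝ v w, (p.coeff 4 * z ^ 4).re < 0 :=
    fun z hz ↦ re_coeff_four_pearceyPolynomial_mul_pow_neg hθ hc _ hz
  have hint (a : ℂ) {u : ℂ} (hu : u ∈ segment ℝ v w) :
      Integrable fun s : ℝ ↦ Complex.exp (p.eval (a + s * u)) * u :=
    (integrable_exp_eval_line (by decide) four_ne_zero hp a (hneg u hu)).mul_const u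
  simp only [hg]
  refine ⟨?_, hint _ (right_mem_segment ℝ v w), ?_⟩
  · simpa only [zero_add] using hint 0 (left_mem_segment ℝ v w)
  · simpa only [zero_add] using integral_exp_eval_line_eq (by decide) four_ne_zero hp 0 _ hneg

/-- For `−π/2 ≤ θ < −π/8`, `x ∈ ℂ`, `r > 0`, `y = r e^{iθ}` and
`g(t) = exp(r^{4/3} f_θ(t) − x y^{2/3} t²)`, the integrals of `g` along the
rotated real line `{s e^{−iθ/3}}` and along the steepest-descent line through
`t₁ = 4^{−1/3} e^{iπ/6}` with direction `e^{−i(π+4θ)/6}` are both absolutely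
convergent and equal. -/
theorem pearcey_path_deformation_case1 (θ : ℝ) (hθ : θ ∈ Set.Ico (-(π / 2)) (-(π / 8)))
    (x : ℂ) (r : ℝ) (hr : 0 < r) :
    let y : ℂ := (r : ℂ) * Complex.exp (Complex.I * (θ : ℂ))
    let g : ℂ → ℂ := fun t =>
      Complex.exp ((r : ℂ) ^ ((4 : ℂ) / 3) * f θ t - x * y ^ ((2 : ℂ) / 3) * t ^ 2)
    (Integrable fun s : ℝ =>
        g ((s : ℂ) * Complex.exp (-Complex.I * ((θ : ℂ) / 3))) *
          Complex.exp (-Complex.I * ((θ : ℂ) / 3))) ∧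
    (Integrable fun s : ℝ =>
        g ((4 : ℂ) ^ (-(1 : ℂ) / 3) * Complex.exp (Complex.I * ((π : ℂ) / 6)) +
            (s : ℂ) * Complex.exp (-Complex.I * (((π : ℂ) + 4 * (θ : ℂ)) / 6))) *
          Complex.exp (-Complex.I * (((π : ℂ) + 4 * (θ : ℂ)) / 6))) ∧
    (∫ s : ℝ,
        g ((s : ℂ) * Complex.exp (-Complex.I * ((θ : ℂ) / 3))) *
          Complex.exp (-Complex.I * ((θ : ℂ) / 3))) =
      ∫ s : ℝ,
        g ((4 : ℂ) ^ (-(1 : ℂ) / 3) * Complex.exp (Complex.I * ((π : ℂ) / 6)) +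
            (s : ℂ) * Complex.exp (-Complex.I * (((π : ℂ) + 4 * (θ : ℂ)) / 6))) *
          Complex.exp (-Complex.I * (((π : ℂ) + 4 * (θ : ℂ)) / 6)) := by
  exact pearcey_path_deformation_case1_general θ ⟨by linarith [hθ.1, pi_pos], hθ.2⟩ x r hr
end

section
/- Fix x ∈ ℂ, θ ∈ [−π/2, −π/8) and N ∈ ℕ. Then, as r → ∞ along the positive reals, with y := r e^{iθ} and all fractional powers of y principal-branch powers, P(x,y) · (2^{5/6}/√(π/3)) · y^{1/3} · exp( −3·4^{−4/3}·e^{2iπ/3}·y^{4/3} + 4^{−2/3}·x·y^{2/3}·e^{iπ/3} − x²/6 ) − ∑_{n=0}^{N} e^{−i(2n+1)π/6} · A_n(x) · y^{−2n/3} = O( r^{−2(N+1)/3} ). -/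
open Real MeasureTheory Filter Asymptotics

/-- The Pearcey-type integral `P(x,y) = ∫₀^∞ exp(−t⁴ − x t²)·cos(y t) dt`. -/
noncomputable def P (x y : ℂ) : ℂ :=
  ∫ t in Set.Ioi (0 : ℝ), Complex.exp (-(t : ℂ) ^ 4 - x * (t : ℂ) ^ 2) * Complex.cos (y * t)

/-- The coefficients `a_{n,m,k}(x)`. -/
noncomputable def a (x : ℂ) (n m k : ℕ) : ℂ :=
  (-1) ^ m * x ^ k * (2 : ℂ) ^ ((4 * ((2 * m - n - k : ℕ) : ℂ)) / 3) /
    ((k.factorial : ℂ) * ((2 * m - n - k).factorial : ℂ) * ((n - m).factorial : ℂ))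

/-- The coefficients `c_n(x)`. -/
noncomputable def c (x : ℂ) (n : ℕ) : ℂ :=
  ∑ k ∈ Finset.range (n / 2 + 1),
    x ^ (n - 2 * k) *
      ((((3 : ℝ) ^ ((k : ℤ) - (n : ℤ)) * (2 : ℝ) ^ (-(n : ℝ) / 3 - (k : ℝ)) *
          (n.factorial : ℝ) / ((k.factorial : ℝ) * ((n - 2 * k).factorial : ℝ))) : ℝ) : ℂ)

/-- The coefficients `A_n(x)`. -/
noncomputable def A (x : ℂ) (n : ℕ) : ℂ :=
  ∑ m ∈ Finset.Icc ((n + 1) / 2) n, ∑ k ∈ Finset.range (2 * m - n + 1),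
    (-1) ^ (n + k) * a x n m k * c x (2 * m + n - k)

/-!
Rotating the contour turns `2 P(x, y)` into the integral of `exp (-t⁴ - x t² + i y t)` along the ray
through the saddle point `T` of `-t⁴ + i y t` given by `4 T³ = i y` and
`arg T = (arg y + π / 2) / 3`, as long as `|arg T| < π / 8`. In the coordinate `t = T (1 + s)`, with
`ζ = T²` and `w = ζ s`, the exponent becomes `3 T⁴ - x T²` plus

  `-6 w² - 2 x w - (4 w³ + x w²) / ζ - w⁴ / ζ²`.

The last two terms make up the generating function, in powers of `ζ⁻¹`, of heat polynomials in `w`,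
so that the coefficients of the expansion are moments of the Gaussian `exp (-6 w² - 2 x w)`, which
are heat polynomials again. The Taylor remainder of the generating function solves a linear
differential equation; this bounds it by `‖ζ‖⁻ᴺ` times a polynomial in `‖w‖` times the Gaussian
decay of the integrand, uniformly for `ζ` in a closed sector inside `|arg ζ| < π / 4`.
-/

section HeatPolynomial

open Finset

variable {𝕜 : Type*} [Field 𝕜]

/-- The heat polynomial `Hₙ(μ, v)`, given by `exp (μ s + v s²) = ∑ Hₙ(μ, v) sⁿ / n!`; it is the
`n`-th moment of a Gaussian of mean `μ` and variance `2v`. The coefficient `n! / (n - 2k)!` is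
written as a falling factorial, which vanishes for `2k > n`. -/
def heatPolynomial (μ v : 𝕜) (n : ℕ) : 𝕜 :=
  ∑ k ∈ range (n / 2 + 1), n.descFactorial (2 * k) / k.factorial * μ ^ (n - 2 * k) * v ^ k

lemma heatPolynomial_eq_sum_range (μ v : 𝕜) {n K : ℕ} (hK : n / 2 < K) :
    heatPolynomial μ v n =
      ∑ k ∈ range K, n.descFactorial (2 * k) / k.factorial * μ ^ (n - 2 * k) * v ^ k := by
  refine sum_subset (range_subset_range.2 hK) fun k _ hk => ?_
  have hlt : n < 2 * k := by rw [mem_range] at hk; omega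
  simp [Nat.descFactorial_of_lt hlt]

@[simp]
lemma heatPolynomial_zero (μ v : 𝕜) : heatPolynomial μ v 0 = 1 := by
  simp [heatPolynomial]

lemma heatPolynomial_mul_left (s μ v : 𝕜) (n : ℕ) :
    heatPolynomial (s * μ) (s ^ 2 * v) n = s ^ n * heatPolynomial μ v n := by
  simp only [heatPolynomial, mul_sum]
  refine sum_congr rfl fun k hk => ?_
  have hs : s ^ n = s ^ (n - 2 * k) * s ^ (2 * k) := by
    rw [← pow_add]; congr 1; rw [mem_range] at hk; omega
  rw [hs, mul_pow, mul_pow, ← pow_mul]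
  ring

lemma descFactorial_succ_add_two (n j : ℕ) :
    (n + 1).descFactorial (j + 2) =
      n.descFactorial (j + 2) + (j + 2) * n * (n - 1).descFactorial j := by
  rcases n with - | n
  · simp
  rw [Nat.succ_descFactorial_succ, Nat.succ_descFactorial_succ, Nat.succ_descFactorial_succ,
    Nat.descFactorial_succ, Nat.add_sub_cancel]
  rcases le_or_gt j n with hj | hj
  · obtain ⟨i, rfl⟩ := Nat.exists_eq_add_of_le hj
    rw [Nat.add_sub_cancel_left]
    ring
  · simp [Nat.descFactorial_of_lt hj]

/-- At `n = 0` the truncated index `n - 1` is harmless, because its coefficient vanishes. -/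
lemma heatPolynomial_succ [CharZero 𝕜] (μ v : 𝕜) (n : ℕ) :
    heatPolynomial μ v (n + 1) =
      μ * heatPolynomial μ v n + 2 * v * (n * heatPolynomial μ v (n - 1)) := by
  rw [heatPolynomial_eq_sum_range μ v (show (n + 1) / 2 < n + 2 by omega),
    heatPolynomial_eq_sum_range μ v (show n / 2 < n + 2 by omega),
    heatPolynomial_eq_sum_range μ v (show (n - 1) / 2 < n + 1 by omega),
    sum_range_succ', sum_range_succ' _ (n + 1), mul_add, add_right_comm]
  congr 1
  · simp only [mul_sum, ← sum_add_distrib]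
    refine sum_congr rfl fun k _ => ?_
    have hk : (k.factorial : 𝕜) ≠ 0 := mod_cast k.factorial_ne_zero
    have hk' : (k + 1 : 𝕜) ≠ 0 := mod_cast k.succ_ne_zero
    have hμ : μ * (n.descFactorial (2 * k + 2) * μ ^ (n - (2 * k + 2))) =
        n.descFactorial (2 * k + 2) * μ ^ (n - 1 - 2 * k) := by
      rcases lt_or_ge n (2 * k + 2) with hn | hn
      · rw [Nat.descFactorial_of_lt hn]; simp only [Nat.cast_zero, zero_mul, mul_zero]
      · rw [show n - 1 - 2 * k = n - (2 * k + 2) + 1 by omega, pow_succ]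
        ring
    rw [mul_add_one, descFactorial_succ_add_two, show n + 1 - (2 * k + 2) = n - 1 - 2 * k by omega,
      Nat.factorial_succ]
    push_cast
    field_simp
    linear_combination -v * v ^ k * hμ
  · simp [pow_succ']

lemma heatPolynomial_div_factorial [CharZero 𝕜] (μ v : 𝕜) (n : ℕ) :
    heatPolynomial μ v n / n.factorial = ∑ m ∈ Icc ((n + 1) / 2) n,
      μ ^ (2 * m - n) / (2 * m - n).factorial * (v ^ (n - m) / (n - m).factorial) := by
  rw [heatPolynomial, sum_div]
  refine sum_nbij' (n - ·) (n - ·) ?_ ?_ ?_ ?_ fun k hk => ?_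
  iterate 4 simp only [mem_range, mem_Icc]; omega
  have hk' : 2 * k ≤ n := by rw [mem_range] at hk; omega
  have hfac : (n.factorial : 𝕜) = (n - 2 * k).factorial * n.descFactorial (2 * k) :=
    mod_cast (Nat.factorial_mul_descFactorial hk').symm
  have hdesc : (n.descFactorial (2 * k) : 𝕜) ≠ 0 := mod_cast (Nat.descFactorial_pos.2 hk').ne'
  rw [hfac, show 2 * (n - k) - n = n - 2 * k by omega, Nat.sub_sub_self (by omega)]
  field_simp

lemma add_pow_div_factorial [CharZero 𝕜] (p q : 𝕜) (n : ℕ) :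
    (p + q) ^ n / n.factorial =
      ∑ k ∈ range (n + 1), p ^ k / k.factorial * (q ^ (n - k) / (n - k).factorial) := by
  rw [add_pow, sum_div]
  refine sum_congr rfl fun k hk => ?_
  have hn : (n.factorial : 𝕜) ≠ 0 := mod_cast n.factorial_ne_zero
  rw [Nat.cast_choose 𝕜 (mem_range_succ_iff.1 hk)]
  field_simp

end HeatPolynomial

section GaussianMoments

variable {b : ℂ}

lemma abs_pow_le_factorial_mul_exp_add_exp_neg (t : ℝ) (n : ℕ) :
    |t| ^ n ≤ n.factorial * (exp t + exp (-t)) := by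
  have hn : (0 : ℝ) < n.factorial := mod_cast n.factorial_pos
  calc |t| ^ n ≤ exp |t| * n.factorial :=
        (div_le_iff₀ hn).1 (pow_div_factorial_le_exp _ (abs_nonneg t) n)
    _ ≤ (exp t + exp (-t)) * n.factorial := by gcongr; exact exp_abs_le t
    _ = _ := mul_comm _ _

lemma integrable_pow_mul_cexp_quadratic (hb : b.re < 0) (c d : ℂ) (n : ℕ) :
    Integrable fun t : ℝ => (t : ℂ) ^ n * Complex.exp (b * t ^ 2 + c * t + d) := by
  have hdom := ((integrable_cexp_quadratic' hb (c + 1) d).norm.add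
    (integrable_cexp_quadratic' hb (c - 1) d).norm).const_mul (n.factorial : ℝ)
  refine hdom.mono' (by fun_prop) (Eventually.of_forall fun t => ?_)
  have hshift (ε : ℝ) : ‖Complex.exp (b * t ^ 2 + (c + ε) * t + d)‖ =
      exp (ε * t) * ‖Complex.exp (b * t ^ 2 + c * t + d)‖ := by
    rw [show b * t ^ 2 + (c + ε) * t + d = (ε * t : ℝ) + (b * t ^ 2 + c * t + d) by push_cast; ring,
      Complex.exp_add, norm_mul, Complex.norm_exp_ofReal]
  have hplus := hshift 1
  have hminus := hshift (-1)
  rw [Complex.ofReal_one, one_mul] at hplus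
  rw [Complex.ofReal_neg, Complex.ofReal_one, ← sub_eq_add_neg, neg_one_mul] at hminus
  rw [Pi.add_apply, hplus, hminus, ← add_mul, ← mul_assoc, norm_mul, norm_pow, Complex.norm_real]
  gcongr
  exact abs_pow_le_factorial_mul_exp_add_exp_neg t n

lemma integrable_pow_mul_exp_neg_mul_sq {κ : ℝ} (hκ : 0 < κ) (n : ℕ) :
    Integrable fun t : ℝ => t ^ n * exp (-κ * t ^ 2) := by
  have h := integrable_pow_mul_cexp_quadratic (b := (-κ : ℝ)) (by simpa using hκ) 0 0 n
  refine h.re.congr (Eventually.of_forall fun t => ?_)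
  simp only [zero_mul, add_zero]
  norm_cast

lemma integral_pow_succ_mul_cexp_quadratic (hb : b.re < 0) (c d : ℂ) (n : ℕ) :
    ∫ t : ℝ, (t : ℂ) ^ (n + 1) * Complex.exp (b * t ^ 2 + c * t + d) =
      -c / (2 * b) * (∫ t : ℝ, (t : ℂ) ^ n * Complex.exp (b * t ^ 2 + c * t + d)) +
        2 * (-1 / (4 * b)) *
          (n * ∫ t : ℝ, (t : ℂ) ^ (n - 1) * Complex.exp (b * t ^ 2 + c * t + d)) := by
  have hb₀ : b ≠ 0 := by rintro rfl; simp at hb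
  have hint := integrable_pow_mul_cexp_quadratic hb c d
  have hderiv (t : ℝ) : HasDerivAt (fun t : ℝ => (t : ℂ) ^ n * Complex.exp (b * t ^ 2 + c * t + d))
      (n * ((t : ℂ) ^ (n - 1) * Complex.exp (b * t ^ 2 + c * t + d)) +
        (2 * b * ((t : ℂ) ^ (n + 1) * Complex.exp (b * t ^ 2 + c * t + d)) +
          c * ((t : ℂ) ^ n * Complex.exp (b * t ^ 2 + c * t + d)))) t := by
    have hid : HasDerivAt (fun t : ℝ => (t : ℂ)) 1 t := (hasDerivAt_id t).ofReal_comp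
    have hexp := ((((hid.fun_pow 2).const_mul b).fun_add (hid.const_mul c)).add_const d).cexp
    refine ((hid.fun_pow n).fun_mul hexp).congr_deriv ?_
    push_cast
    ring
  have hint' : Integrable fun t : ℝ =>
      2 * b * ((t : ℂ) ^ (n + 1) * Complex.exp (b * t ^ 2 + c * t + d)) +
        c * ((t : ℂ) ^ n * Complex.exp (b * t ^ 2 + c * t + d)) :=
    ((hint _).const_mul _).add ((hint _).const_mul _)
  have hzero := integral_eq_zero_of_hasDerivAt_of_integrable hderiv
    (((hint _).const_mul _).add hint') (hint n)
  rw [integral_add ((hint _).const_mul _) hint', integral_add ((hint _).const_mul _)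
    ((hint _).const_mul _), integral_const_mul, integral_const_mul, integral_const_mul] at hzero
  have hμ : 2 * b * (-c / (2 * b)) = -c := by field_simp
  have hv : 2 * b * (2 * (-1 / (4 * b))) = -1 := by field_simp; norm_num
  refine mul_left_cancel₀ (mul_ne_zero two_ne_zero hb₀) ?_
  rw [mul_add, ← mul_assoc (2 * b), ← mul_assoc (2 * b), hμ, hv]
  linear_combination hzero

lemma integral_pow_mul_cexp_quadratic (hb : b.re < 0) (c d : ℂ) (n : ℕ) :
    ∫ t : ℝ, (t : ℂ) ^ n * Complex.exp (b * t ^ 2 + c * t + d) =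
      heatPolynomial (-c / (2 * b)) (-1 / (4 * b)) n *
        ∫ t : ℝ, Complex.exp (b * t ^ 2 + c * t + d) := by
  induction n using Nat.strong_induction_on with
  | _ n ih =>
    rcases n with - | n
    · simp
    · rw [integral_pow_succ_mul_cexp_quadratic hb, heatPolynomial_succ, ih n n.lt_succ_self,
        ih (n - 1) (by omega)]
      ring

end GaussianMoments

section RotatedGaussian

variable {ζ : ℂ}

lemma sqrt_cpow_half_sq_div (hζ : 0 < ζ.re) {r : ℝ} (hr : 0 < r) :
    ((r : ℂ) / ζ ^ 2) ^ (1 / 2 : ℂ) = √r / ζ := by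
  have hre : 0 < ((√r : ℂ) / ζ).re := by
    rw [div_eq_mul_inv, Complex.re_ofReal_mul, Complex.inv_re]
    have := Complex.normSq_pos.2 (show ζ ≠ 0 by rintro rfl; simp at hζ)
    positivity
  have harg := abs_lt.1 (Complex.abs_arg_lt_pi_div_two_iff.2 (Or.inl hre))
  rw [show (r : ℂ) / ζ ^ 2 = (√r / ζ) ^ 2 by
      rw [div_pow, ← Complex.ofReal_pow, sq_sqrt hr.le],
    show (1 / 2 : ℂ) = ((2 : ℕ) : ℂ)⁻¹ by norm_num]
  apply Complex.pow_cpow_nat_inv two_ne_zero <;> push_cast <;> linarith [harg.1, harg.2]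

lemma neg_ofReal_mul_sq_re_neg (hζ : 0 < (ζ ^ 2).re) {r : ℝ} (hr : 0 < r) :
    (-(r * ζ ^ 2)).re < 0 := by
  rw [Complex.neg_re, Complex.re_ofReal_mul]
  exact neg_neg_of_pos (mul_pos hr hζ)

lemma integrable_rotated_gaussian_pow (hζ : 0 < (ζ ^ 2).re) {r : ℝ} (hr : 0 < r) (c : ℂ) (n : ℕ) :
    Integrable fun s : ℝ => (ζ * s) ^ n * Complex.exp (-r * (ζ * s) ^ 2 + c * (ζ * s)) := by
  have h := integrable_pow_mul_cexp_quadratic (neg_ofReal_mul_sq_re_neg hζ hr) (c * ζ) 0 n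
  refine (h.const_mul (ζ ^ n)).congr (Eventually.of_forall fun s => ?_)
  simp only [← mul_assoc, mul_pow]
  ring_nf

lemma integral_rotated_gaussian_pow (hζ : 0 < ζ.re) (hζ2 : 0 < (ζ ^ 2).re) {r : ℝ} (hr : 0 < r)
    (c : ℂ) (n : ℕ) :
    ζ * ∫ s : ℝ, (ζ * s) ^ n * Complex.exp (-r * (ζ * s) ^ 2 + c * (ζ * s)) =
      √(π / r) * Complex.exp (c ^ 2 / (4 * r)) * heatPolynomial (c / (2 * r)) (1 / (4 * r)) n := by
  have hζ₀ : ζ ≠ 0 := by rintro rfl; simp at hζ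
  have hr₀ : (r : ℂ) ≠ 0 := mod_cast hr.ne'
  have hb := neg_ofReal_mul_sq_re_neg hζ2 hr
  have hstd : ∀ s : ℝ, (ζ * s) ^ n * Complex.exp (-r * (ζ * s) ^ 2 + c * (ζ * s)) =
      ζ ^ n * ((s : ℂ) ^ n * Complex.exp (-(r * ζ ^ 2) * s ^ 2 + c * ζ * s + 0)) := fun s => by
    rw [mul_pow ζ, mul_assoc]; ring_nf
  have hhom : ζ ^ n * heatPolynomial (-(c * ζ) / (2 * -(r * ζ ^ 2))) (-1 / (4 * -(r * ζ ^ 2))) n =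
      heatPolynomial (c / (2 * r)) (1 / (4 * r)) n := by
    rw [← heatPolynomial_mul_left]
    congr 1 <;> field_simp
  have hexp : (0 : ℂ) - (c * ζ) ^ 2 / (4 * -(r * ζ ^ 2)) = c ^ 2 / (4 * r) := by field_simp; ring
  have hroot : ((π : ℂ) / -(-(r * ζ ^ 2))) ^ (1 / 2 : ℂ) = √(π / r) / ζ := by
    rw [← sqrt_cpow_half_sq_div hζ (by positivity), neg_neg, ← div_div, Complex.ofReal_div]
  simp only [hstd]
  rw [integral_const_mul, integral_pow_mul_cexp_quadratic hb, integral_cexp_quadratic hb, hexp,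
    hroot, ← hhom]
  field_simp

end RotatedGaussian

section Coefficients

open Finset

/-- The cube root of two, in powers of which all the constants of the expansion are expressed. -/
noncomputable def cbrtTwo : ℂ := 2 ^ (1 / 3 : ℂ)

lemma cbrtTwo_pow_three : cbrtTwo ^ 3 = 2 := by
  rw [cbrtTwo, ← Complex.cpow_nat_mul]
  norm_num

lemma cbrtTwo_ne_zero : cbrtTwo ≠ 0 := by
  intro h
  simpa [h] using cbrtTwo_pow_three

lemma cpow_eq_cpow_one_third_pow (z : ℂ) {s : ℂ} {n : ℕ} (hs : s = n / 3) :
    z ^ s = (z ^ (1 / 3 : ℂ)) ^ n := by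
  rw [← Complex.cpow_nat_mul, hs, mul_one_div]

lemma two_cpow_eq_cbrtTwo_pow {s : ℂ} {n : ℕ} (hs : s = n / 3) : (2 : ℂ) ^ s = cbrtTwo ^ n :=
  cpow_eq_cpow_one_third_pow 2 hs

lemma c_eq_heatPolynomial (x : ℂ) (n : ℕ) :
    c x n = heatPolynomial (cbrtTwo ^ 2 * x / 6) (cbrtTwo ^ 4 / 24) n := by
  rw [c, heatPolynomial]
  refine sum_congr rfl fun k hk => ?_
  obtain ⟨d, rfl⟩ := Nat.exists_eq_add_of_le (show 2 * k ≤ n by rw [mem_range] at hk; omega)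
  have hτ := cbrtTwo_ne_zero
  have hd : (d.factorial : ℂ) ≠ 0 := mod_cast d.factorial_ne_zero
  have hfac : ((2 * k + d).factorial : ℂ) = d.factorial * (2 * k + d).descFactorial (2 * k) := by
    have := Nat.factorial_mul_descFactorial (Nat.le_add_right (2 * k) d)
    rw [Nat.add_sub_cancel_left] at this
    exact_mod_cast this.symm
  have h3 : (3 : ℝ) ^ ((k : ℤ) - ((2 * k + d : ℕ) : ℤ)) = ((3 : ℝ) ^ (k + d))⁻¹ := by
    rw [show (k : ℤ) - ((2 * k + d : ℕ) : ℤ) = -((k + d : ℕ) : ℤ) by push_cast; ring,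
      zpow_neg, zpow_natCast]
  have h2 : (((2 : ℝ) ^ (-((2 * k + d : ℕ) : ℝ) / 3 - (k : ℝ)) : ℝ) : ℂ) =
      (cbrtTwo ^ (5 * k + d))⁻¹ := by
    rw [Complex.ofReal_cpow (by norm_num), ← two_cpow_eq_cbrtTwo_pow rfl, ← Complex.cpow_neg]
    congr 1
    push_cast
    ring
  have h6 : (6 : ℂ) ^ d = 3 ^ d * cbrtTwo ^ (3 * d) := by
    rw [pow_mul, cbrtTwo_pow_three, ← mul_pow]; norm_num
  have h24 : (24 : ℂ) ^ k = 3 ^ k * cbrtTwo ^ (9 * k) := by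
    rw [show 9 * k = 3 * (3 * k) by ring, pow_mul, cbrtTwo_pow_three, pow_mul, ← mul_pow]; norm_num
  rw [Nat.add_sub_cancel_left, h3]
  simp only [Complex.ofReal_div, Complex.ofReal_mul, h2, Complex.ofReal_natCast, Complex.ofReal_inv,
    Complex.ofReal_pow, Complex.ofReal_ofNat, hfac, div_pow, mul_pow, h6, h24]
  field_simp
  ring

lemma a_mul_pow (x w : ℂ) {n m k : ℕ} (hk : k ≤ 2 * m - n) (hm : m ≤ n) (hnm : n ≤ 2 * m) :
    (-1) ^ (n + k) * a x n m k * (-cbrtTwo ^ 2 * w) ^ (2 * m + n - k) =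
      cbrtTwo ^ (4 * n) *
        ((-x * w ^ 2) ^ k / k.factorial *
          ((-4 * w ^ 3) ^ (2 * m - n - k) / (2 * m - n - k).factorial) *
            ((-w ^ 4) ^ (n - m) / (n - m).factorial)) := by
  obtain ⟨l, hl⟩ := Nat.exists_eq_add_of_le hk
  obtain ⟨j, rfl⟩ := Nat.exists_eq_add_of_le hm
  obtain rfl : m = j + k + l := by omega
  rw [a, show 2 * (j + k + l) - (j + k + l + j) - k = l by omega,
    show 2 * (j + k + l) + (j + k + l + j) - k = 4 * j + 2 * k + 3 * l by omega,
    Nat.add_sub_cancel_left, two_cpow_eq_cbrtTwo_pow (n := 4 * l) (by push_cast; ring),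
    neg_mul, neg_mul, neg_mul, neg_pow (_ * w), neg_pow (x * _), neg_pow (4 * _), neg_pow (w ^ 4)]
  have h4 : (4 : ℂ) ^ l = cbrtTwo ^ (6 * l) := by
    rw [show 6 * l = 3 * (2 * l) by ring, pow_mul, cbrtTwo_pow_three, pow_mul]; norm_num
  have hsign : (-1 : ℂ) ^ (j + k + l + j + k) * (-1) ^ (j + k + l) *
      (-1) ^ (4 * j + 2 * k + 3 * l) = (-1) ^ k * (-1) ^ l * (-1) ^ j := by
    simp only [← pow_add]
    exact neg_one_pow_congr (by simp only [Nat.even_iff]; omega)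
  rw [mul_pow (4 : ℂ), h4]
  linear_combination x ^ k * cbrtTwo ^ (4 * l) / (k.factorial * l.factorial * j.factorial) *
    (cbrtTwo ^ 2 * w) ^ (4 * j + 2 * k + 3 * l) * hsign

/-- The coefficient of `ζ⁻ⁿ` in `exp (-(4 w³ + x w²) / ζ - w⁴ / ζ²)`, the factor by which the
Pearcey integrand differs from a Gaussian in the saddle-point coordinate `w`. -/
noncomputable def saddleCoeff (x w : ℂ) (n : ℕ) : ℂ :=
  heatPolynomial (-x * w ^ 2 + -4 * w ^ 3) (-w ^ 4) n / n.factorial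

lemma saddleCoeff_eq_sum (x w : ℂ) (n : ℕ) :
    saddleCoeff x w n = (cbrtTwo ^ (4 * n))⁻¹ *
      ∑ m ∈ Icc ((n + 1) / 2) n, ∑ k ∈ range (2 * m - n + 1),
        (-1) ^ (n + k) * a x n m k * (-cbrtTwo ^ 2 * w) ^ (2 * m + n - k) := by
  rw [eq_inv_mul_iff_mul_eq₀ (pow_ne_zero _ cbrtTwo_ne_zero), saddleCoeff,
    heatPolynomial_div_factorial, mul_sum]
  refine sum_congr rfl fun m hm => ?_
  rw [mem_Icc] at hm
  rw [add_pow_div_factorial, sum_mul, mul_sum]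
  refine sum_congr rfl fun k hk => ?_
  rw [a_mul_pow x w (mem_range_succ_iff.1 hk) hm.2 (by omega)]

/-- The Gaussian `exp (-6 w² - 2 x w)` that governs the Pearcey integral near its saddle point,
in the coordinate in which the saddle is at `w = 0`. -/
noncomputable def saddleGaussian (x w : ℂ) : ℂ := Complex.exp (-6 * w ^ 2 - 2 * x * w)

variable {ζ : ℂ}

lemma saddleGaussian_eq (x w : ℂ) :
    saddleGaussian x w = Complex.exp (-(6 : ℝ) * w ^ 2 + -2 * x * w) := by
  rw [saddleGaussian, Complex.ofReal_ofNat, neg_mul 2 x, neg_mul (2 * x), ← sub_eq_add_neg]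

lemma integrable_mul_pow_mul_saddleGaussian (hζ : 0 < (ζ ^ 2).re) (x p : ℂ) (n : ℕ) :
    Integrable fun s : ℝ => (p * (ζ * s)) ^ n * saddleGaussian x (ζ * s) := by
  refine ((integrable_rotated_gaussian_pow hζ (r := 6) (by norm_num) (-2 * x) n).const_mul
    (p ^ n)).congr (Eventually.of_forall fun s => ?_)
  simp only [saddleGaussian_eq, mul_pow p, mul_assoc (p ^ n)]

lemma integral_mul_pow_mul_saddleGaussian (hζ : 0 < ζ.re) (hζ2 : 0 < (ζ ^ 2).re) (x : ℂ) (n : ℕ) :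
    ζ * ∫ s : ℝ, (-cbrtTwo ^ 2 * (ζ * s)) ^ n * saddleGaussian x (ζ * s) =
      √(π / 6) * Complex.exp (x ^ 2 / 6) * c x n := by
  have hmoment := integral_rotated_gaussian_pow hζ hζ2 (r := 6) (by norm_num) (-2 * x) n
  have hc : c x n = (-cbrtTwo ^ 2) ^ n *
      heatPolynomial (-2 * x / (2 * (6 : ℝ))) (1 / (4 * (6 : ℝ))) n := by
    rw [c_eq_heatPolynomial, ← heatPolynomial_mul_left, Complex.ofReal_ofNat]
    congr 1 <;> ring
  have hexp : (-2 * x) ^ 2 / (4 * (6 : ℝ)) = x ^ 2 / 6 := by push_cast; ring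
  simp only [saddleGaussian_eq, mul_pow (-cbrtTwo ^ 2), mul_assoc ((-cbrtTwo ^ 2) ^ n)]
  rw [integral_const_mul, hc, mul_left_comm, hmoment, hexp]
  ring

lemma saddleGaussian_mul_saddleCoeff (x w : ℂ) (n : ℕ) :
    saddleGaussian x w * saddleCoeff x w n = (cbrtTwo ^ (4 * n))⁻¹ *
      ∑ m ∈ Icc ((n + 1) / 2) n, ∑ k ∈ range (2 * m - n + 1), (-1) ^ (n + k) * a x n m k *
        ((-cbrtTwo ^ 2 * w) ^ (2 * m + n - k) * saddleGaussian x w) := by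
  rw [saddleCoeff_eq_sum, mul_left_comm, mul_comm (saddleGaussian x w)]
  simp only [sum_mul, mul_assoc]

lemma integrable_saddleGaussian_mul_saddleCoeff (hζ : 0 < (ζ ^ 2).re) (x : ℂ) (n : ℕ) :
    Integrable fun s : ℝ => saddleGaussian x (ζ * s) * saddleCoeff x (ζ * s) n := by
  simp only [saddleGaussian_mul_saddleCoeff]
  exact (integrable_finsetSum _ fun m _ => integrable_finsetSum _ fun k _ =>
    (integrable_mul_pow_mul_saddleGaussian hζ x _ _).const_mul _).const_mul _

lemma integral_saddleGaussian_mul_saddleCoeff (hζ : 0 < ζ.re) (hζ2 : 0 < (ζ ^ 2).re) (x : ℂ)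
    (n : ℕ) :
    ζ * ∫ s : ℝ, saddleGaussian x (ζ * s) * saddleCoeff x (ζ * s) n =
      √(π / 6) * Complex.exp (x ^ 2 / 6) * ((cbrtTwo ^ (4 * n))⁻¹ * A x n) := by
  have hint (p : ℂ) (q : ℕ) :
      Integrable fun s : ℝ => p * ((-cbrtTwo ^ 2 * (ζ * s)) ^ q * saddleGaussian x (ζ * s)) :=
    (integrable_mul_pow_mul_saddleGaussian hζ2 x _ _).const_mul _
  simp only [saddleGaussian_mul_saddleCoeff]
  rw [integral_const_mul, mul_left_comm ζ, mul_left_comm _ (cbrtTwo ^ (4 * n))⁻¹, A,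
    integral_finsetSum _ fun m _ => integrable_finsetSum _ fun k _ => hint _ _]
  congr 1
  rw [mul_sum, mul_sum]
  refine sum_congr rfl fun m _ => ?_
  rw [integral_finsetSum _ fun k _ => hint _ _, mul_sum, mul_sum]
  refine sum_congr rfl fun k _ => ?_
  rw [integral_const_mul, mul_left_comm, integral_mul_pow_mul_saddleGaussian hζ hζ2]
  ring

end Coefficients

section HeatRemainder

open Finset

/-- The remainder at `s` of the generating function `exp (μ s + v s²)` of the heat polynomials,
after its first `N` Taylor terms. -/
noncomputable def heatRemainder (μ v : ℂ) (N : ℕ) (s : ℝ) : ℂ :=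
  Complex.exp (μ * s + v * s ^ 2) -
    ∑ n ∈ range N, (s : ℂ) ^ n * (heatPolynomial μ v n / n.factorial)

variable {μ v : ℂ}

lemma heatRemainder_zero :
    heatRemainder μ v 0 = fun s : ℝ => Complex.exp (μ * s + v * s ^ 2) := by
  funext s
  simp [heatRemainder]

lemma heatRemainder_succ (N : ℕ) (s : ℝ) : heatRemainder μ v (N + 1) s =
    heatRemainder μ v N s - (s : ℂ) ^ N * (heatPolynomial μ v N / N.factorial) := by
  rw [heatRemainder, sum_range_succ, ← sub_sub, heatRemainder]

lemma heatRemainder_succ_zero (N : ℕ) : heatRemainder μ v (N + 1) 0 = 0 := by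
  simp [heatRemainder, sum_range_succ']

lemma hasDerivAt_heatRemainder_zero (s : ℝ) : HasDerivAt (heatRemainder μ v 0)
    (μ * heatRemainder μ v 0 s + 2 * v * s * heatRemainder μ v 0 s) s := by
  have hid : HasDerivAt (fun s : ℝ => (s : ℂ)) 1 s := (hasDerivAt_id s).ofReal_comp
  have hexp := ((hid.const_mul μ).fun_add ((hid.fun_pow 2).const_mul v)).cexp
  rw [heatRemainder_zero]
  refine hexp.congr_deriv ?_
  push_cast
  ring

/-- The exponential solves `E' = (μ + 2 v s) E`, and the recurrence of the heat polynomials says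
that its Taylor polynomials do so up to a shift of their order. -/
lemma hasDerivAt_heatRemainder_succ (N : ℕ) (s : ℝ) : HasDerivAt (heatRemainder μ v (N + 1))
    (μ * heatRemainder μ v N s + 2 * v * s * heatRemainder μ v (N - 1) s) s := by
  have hid : HasDerivAt (fun s : ℝ => (s : ℂ)) 1 s := (hasDerivAt_id s).ofReal_comp
  induction N with
  | zero =>
    have hsucc : heatRemainder μ v (0 + 1) = fun s => heatRemainder μ v 0 s - 1 := by
      funext s
      simp [heatRemainder_succ]
    rw [hsucc]
    exact (hasDerivAt_heatRemainder_zero s).sub_const 1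
  | succ N ih =>
    rw [funext (heatRemainder_succ (N + 1))]
    refine (ih.sub ((hid.fun_pow (N + 1)).mul_const _)).congr_deriv ?_
    have hN : ((N + 1 : ℕ) : ℂ) ≠ 0 := mod_cast N.succ_ne_zero
    have hfac : (N.factorial : ℂ) ≠ 0 := mod_cast N.factorial_ne_zero
    rw [heatRemainder_succ N, heatPolynomial_succ, Nat.factorial_succ, Nat.cast_mul]
    rcases N with - | N
    · simp only [zero_add, zero_tsub, tsub_self, Nat.cast_zero, Nat.cast_one, Nat.factorial_zero,
        heatPolynomial_zero, pow_zero, mul_one, one_mul, mul_zero, add_zero,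
        div_self (one_ne_zero' ℂ)]
      ring
    · rw [Nat.factorial_succ, Nat.cast_mul] at hfac
      rw [Nat.add_sub_cancel, Nat.add_sub_cancel, heatRemainder_succ N, Nat.factorial_succ,
        Nat.cast_mul]
      have hN' : ((N + 1 : ℕ) : ℂ) ≠ 0 := mod_cast N.succ_ne_zero
      have hfac' := right_ne_zero_of_mul hfac
      field_simp
      ring

lemma norm_mul_heatRemainder_pred_le {K M t : ℝ} {N : ℕ} (hv : ‖v‖ ≤ K) (hv2 : ‖v‖ ≤ K ^ 2)
    (ht : t ∈ Set.Icc 0 1) (hR : ∀ m ≤ N, ‖heatRemainder μ v m t‖ ≤ M * (3 * K * t) ^ m) :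
    2 * ‖v‖ * t * ‖heatRemainder μ v (N - 1) t‖ ≤ 2 * K * (M * (3 * K * t) ^ N) := by
  have hK : 0 ≤ K := (norm_nonneg _).trans hv
  have ht₀ := ht.1
  have hR' := hR (N - 1) (Nat.sub_le N 1)
  rcases N with - | N
  · calc 2 * ‖v‖ * t * ‖heatRemainder μ v 0 t‖ ≤ 2 * K * 1 * (M * (3 * K * t) ^ 0) := by
          gcongr
          exact ht.2
      _ = 2 * K * (M * (3 * K * t) ^ 0) := by ring
  · have hM := (norm_nonneg _).trans hR'
    calc 2 * ‖v‖ * t * ‖heatRemainder μ v N t‖ ≤ 2 * K ^ 2 * t * (M * (3 * K * t) ^ N) := by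
          gcongr
          exact hR'
      _ ≤ 3 * (2 * K ^ 2 * t * (M * (3 * K * t) ^ N)) :=
          le_mul_of_one_le_left (mul_nonneg (by positivity) hM) (by norm_num)
      _ = 2 * K * (M * (3 * K * t) ^ (N + 1)) := by ring

lemma norm_heatRemainder_le {K M : ℝ} (hμ : ‖μ‖ ≤ K) (hv : ‖v‖ ≤ K) (hv2 : ‖v‖ ≤ K ^ 2)
    (hM : ∀ s ∈ Set.Icc (0 : ℝ) 1, ‖Complex.exp (μ * s + v * s ^ 2)‖ ≤ M) (N : ℕ) :
    ∀ s ∈ Set.Icc (0 : ℝ) 1, ‖heatRemainder μ v N s‖ ≤ M * (3 * K * s) ^ N := by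
  have hK : 0 ≤ K := (norm_nonneg _).trans hμ
  have hM₀ : 0 ≤ M := (norm_nonneg _).trans (hM 0 ⟨le_rfl, zero_le_one⟩)
  induction N using Nat.strong_induction_on with
  | _ N ih =>
  rcases N with - | N
  · simpa [heatRemainder] using hM
  intro s hs
  have hderiv : ∀ t ∈ Set.Ico 0 s,
      ‖μ * heatRemainder μ v N t + 2 * v * t * heatRemainder μ v (N - 1) t‖ ≤
        M * (3 * K) ^ (N + 1) * s ^ N := by
    intro t ht
    have ht1 : t ∈ Set.Icc (0 : ℝ) 1 := ⟨ht.1, ht.2.le.trans hs.2⟩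
    have hRN : ‖heatRemainder μ v N t‖ ≤ M * (3 * K * t) ^ N := ih N N.lt_succ_self t ht1
    have hRN' := norm_mul_heatRemainder_pred_le (N := N) hv hv2 ht1
      fun m hm => ih m (by omega) t ht1
    calc _ ≤ ‖μ‖ * ‖heatRemainder μ v N t‖ + 2 * ‖v‖ * t * ‖heatRemainder μ v (N - 1) t‖ := by
          refine (norm_add_le _ _).trans_eq ?_
          simp [abs_of_nonneg ht.1]
      _ ≤ K * (M * (3 * K * t) ^ N) + 2 * K * (M * (3 * K * t) ^ N) := by gcongr
      _ = M * (3 * K) ^ (N + 1) * t ^ N := by ring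
      _ ≤ M * (3 * K) ^ (N + 1) * s ^ N := by
          have := ht.1
          gcongr
          exact ht.2.le
  have hmv := norm_image_sub_le_of_norm_deriv_le_segment'
    (fun t _ => (hasDerivAt_heatRemainder_succ N t).hasDerivWithinAt) hderiv s ⟨hs.1, le_rfl⟩
  rw [heatRemainder_succ_zero, sub_zero, sub_zero] at hmv
  exact hmv.trans_eq (by ring)

end HeatRemainder

section Laplace

open Finset

variable {ζ : ℂ}

/-- The remainder after `N` terms of the expansion of `exp (-(4 w³ + x w²) / ζ - w⁴ / ζ²)` in
powers of `ζ⁻¹`. -/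
noncomputable def saddleRemainder (x ζ w : ℂ) (N : ℕ) : ℂ :=
  heatRemainder (ζ⁻¹ * (-x * w ^ 2 + -4 * w ^ 3)) (ζ⁻¹ ^ 2 * -w ^ 4) N 1

lemma saddleRemainder_eq_sub_sum (x ζ w : ℂ) (N : ℕ) :
    saddleRemainder x ζ w N =
      saddleRemainder x ζ w 0 - ∑ n ∈ range N, ζ⁻¹ ^ n * saddleCoeff x w n := by
  simp only [saddleRemainder, heatRemainder, saddleCoeff, heatPolynomial_mul_left, range_zero,
    sum_empty, sub_zero, Complex.ofReal_one, one_pow, one_mul, mul_div_assoc]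

/-- Along `w = ζ u` the exponent is `-(ζ u)² ((s u + 2)² + 2) - x ζ u (s u + 2)`, whose last term is
absorbed into the first by AM-GM. -/
lemma norm_saddleGaussian_mul_cexp_le (x : ℂ) {κ : ℝ} (hκ : 0 < κ) (hζ₀ : ζ ≠ 0)
    (hζ : κ * ‖ζ‖ ^ 2 ≤ (ζ ^ 2).re) (u s : ℝ) :
    ‖saddleGaussian x (ζ * u) *
        Complex.exp (ζ⁻¹ * (-x * (ζ * u) ^ 2 + -4 * (ζ * u) ^ 3) * s +
          ζ⁻¹ ^ 2 * -(ζ * u) ^ 4 * s ^ 2)‖ ≤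
      exp (‖x‖ ^ 2 / (4 * κ)) * exp (-(2 * κ) * (‖ζ‖ * u) ^ 2) := by
  have hexponent : -6 * (ζ * u) ^ 2 - 2 * x * (ζ * u) +
      (ζ⁻¹ * (-x * (ζ * u) ^ 2 + -4 * (ζ * u) ^ 3) * s + ζ⁻¹ ^ 2 * -(ζ * u) ^ 4 * s ^ 2) =
      -(ζ ^ 2 * (u ^ 2 * ((s * u + 2) ^ 2 + 2) : ℝ)) - x * ζ * (u * (s * u + 2) : ℝ) := by
    push_cast
    field_simp
    ring
  rw [saddleGaussian, ← Complex.exp_add, hexponent, Complex.norm_exp, ← exp_add, exp_le_exp,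
    Complex.sub_re, Complex.neg_re, Complex.re_mul_ofReal]
  have hx : -(x * ζ * (u * (s * u + 2) : ℝ)).re ≤ ‖x‖ * (‖ζ‖ * |u * (s * u + 2)|) := by
    refine (neg_le_abs _).trans ((Complex.abs_re_le_norm _).trans_eq ?_)
    rw [norm_mul, norm_mul, Complex.norm_real, norm_eq_abs, mul_assoc]
  have hamgm (q : ℝ) : ‖x‖ * q ≤ ‖x‖ ^ 2 / (4 * κ) + κ * q ^ 2 := by
    rw [← sub_nonneg, show ‖x‖ ^ 2 / (4 * κ) + κ * q ^ 2 - ‖x‖ * q =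
      (2 * κ * q - ‖x‖) ^ 2 / (4 * κ) by field_simp; ring]
    positivity
  have hmain : κ * ‖ζ‖ ^ 2 * (u ^ 2 * ((s * u + 2) ^ 2 + 2)) ≤
      (ζ ^ 2).re * (u ^ 2 * ((s * u + 2) ^ 2 + 2)) := by gcongr
  have hq := hamgm (‖ζ‖ * |u * (s * u + 2)|)
  rw [mul_pow, sq_abs] at hq
  linarith

lemma pow_le_one_add_pow {σ : ℝ} (hσ : 0 ≤ σ) {k n : ℕ} (hkn : k ≤ n) : σ ^ k ≤ 1 + σ ^ n := by
  rcases le_total σ 1 with h | h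
  · linarith [pow_le_one₀ (n := k) hσ h, pow_nonneg hσ n]
  · linarith [pow_le_pow_right₀ h hkn]

lemma norm_inv_mul_saddleDrift_le (x ζ w : ℂ) :
    ‖ζ⁻¹ * (-x * w ^ 2 + -4 * w ^ 3)‖ ≤ ‖ζ‖⁻¹ * ((4 + ‖x‖) * (1 + ‖w‖ ^ 4)) := by
  rw [norm_mul, norm_inv]
  gcongr
  calc ‖-x * w ^ 2 + -4 * w ^ 3‖ ≤ ‖x‖ * ‖w‖ ^ 2 + 4 * ‖w‖ ^ 3 := by
        refine (norm_add_le _ _).trans_eq ?_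
        simp
    _ ≤ ‖x‖ * (1 + ‖w‖ ^ 4) + 4 * (1 + ‖w‖ ^ 4) := by
        gcongr <;> exact pow_le_one_add_pow (norm_nonneg w) (by norm_num)
    _ = (4 + ‖x‖) * (1 + ‖w‖ ^ 4) := by ring

lemma norm_sq_inv_mul_pow_four_le (hζ₁ : 1 ≤ ‖ζ‖) {L : ℝ} (w : ℂ) (hL₁ : 1 ≤ L)
    (hL : ‖w‖ ^ 4 ≤ L) :
    ‖ζ⁻¹ ^ 2 * -w ^ 4‖ ≤ ‖ζ‖⁻¹ * L ∧ ‖ζ⁻¹ ^ 2 * -w ^ 4‖ ≤ (‖ζ‖⁻¹ * L) ^ 2 := by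
  rw [norm_mul, norm_pow, norm_inv, norm_neg, norm_pow, mul_pow]
  constructor
  · gcongr
    exact pow_le_of_le_one (by positivity) (inv_le_one_of_one_le₀ hζ₁) two_ne_zero
  · gcongr
    exact hL.trans (le_self_pow₀ hL₁ two_ne_zero)

lemma norm_saddleGaussian_mul_saddleRemainder_le (x : ℂ) {κ : ℝ} (hκ : 0 < κ) (hζ₁ : 1 ≤ ‖ζ‖)
    (hζ : κ * ‖ζ‖ ^ 2 ≤ (ζ ^ 2).re) (N : ℕ) (u : ℝ) :
    ‖saddleGaussian x (ζ * u) * saddleRemainder x ζ (ζ * u) N‖ ≤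
      ‖ζ‖⁻¹ ^ N * (exp (‖x‖ ^ 2 / (4 * κ)) * (3 * (4 + ‖x‖)) ^ N *
        ((1 + (‖ζ‖ * u) ^ 4) ^ N * exp (-(2 * κ) * (‖ζ‖ * u) ^ 2))) := by
  have hζ₀ : ζ ≠ 0 := norm_pos_iff.1 (by linarith)
  have hG : 0 < ‖saddleGaussian x (ζ * u)‖ := norm_pos_iff.2 (Complex.exp_ne_zero _)
  have hw : ‖ζ * u‖ ^ 4 = (‖ζ‖ * u) ^ 4 := by
    rw [norm_mul, Complex.norm_real, norm_eq_abs, mul_pow, mul_pow, Even.pow_abs (by decide)]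
  have hM (s : ℝ) := (le_div_iff₀' hG).2 <| (norm_mul _ _).symm.trans_le
    (norm_saddleGaussian_mul_cexp_le x hκ hζ₀ hζ u s)
  have hw₀ : 0 ≤ ‖ζ * u‖ ^ 4 := by positivity
  obtain ⟨hv, hv2⟩ := norm_sq_inv_mul_pow_four_le hζ₁ (ζ * u)
    (L := (4 + ‖x‖) * (1 + ‖ζ * u‖ ^ 4)) (by nlinarith [norm_nonneg x])
    (by nlinarith [norm_nonneg x])
  have hR := norm_heatRemainder_le (norm_inv_mul_saddleDrift_le x ζ (ζ * u)) hv hv2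
    (fun s _ => hM s) N 1 ⟨zero_le_one, le_rfl⟩
  rw [norm_mul, saddleRemainder]
  calc _ ≤ _ := mul_le_mul_of_nonneg_left hR hG.le
    _ = exp (‖x‖ ^ 2 / (4 * κ)) * exp (-(2 * κ) * (‖ζ‖ * u) ^ 2) *
          (‖ζ‖⁻¹ * (3 * (4 + ‖x‖)) * (1 + (‖ζ‖ * u) ^ 4)) ^ N := by
        rw [← mul_assoc, mul_div_cancel₀ _ hG.ne', hw]
        congr 2
        ring
    _ = _ := by
        rw [mul_pow _ (1 + _), mul_pow ‖ζ‖⁻¹]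
        ac_rfl

/-- The Pearcey integrand at `t = T (1 + s)`, where `T` is the saddle point and `ζ = T ^ 2`,
relative to its value at the saddle and integrated along the ray through it. -/
noncomputable def saddleIntegral (x ζ : ℂ) : ℂ :=
  ζ * ∫ s : ℝ, Complex.exp (-ζ ^ 2 * (s ^ 4 + 4 * s ^ 3 + 6 * s ^ 2) - x * ζ * (s ^ 2 + 2 * s))

lemma saddleIntegral_eq (x : ℂ) (hζ₀ : ζ ≠ 0) :
    saddleIntegral x ζ = ζ * ∫ s : ℝ, saddleGaussian x (ζ * s) * saddleRemainder x ζ (ζ * s) 0 := by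
  rw [saddleIntegral]
  congr 2 with s
  rw [saddleRemainder, heatRemainder_zero, saddleGaussian, ← Complex.exp_add, Complex.ofReal_one]
  congr 1
  field_simp
  ring

lemma integrable_one_add_pow_four_pow_mul_exp {κ : ℝ} (hκ : 0 < κ) (N : ℕ) :
    Integrable fun σ : ℝ => (1 + σ ^ 4) ^ N * exp (-κ * σ ^ 2) := by
  have hexpand (σ : ℝ) : (1 + σ ^ 4) ^ N * exp (-κ * σ ^ 2) =
      ∑ k ∈ range (N + 1), N.choose k * (σ ^ (4 * k) * exp (-κ * σ ^ 2)) := by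
    rw [add_comm, add_pow, sum_mul]
    exact sum_congr rfl fun k _ => by rw [one_pow, pow_mul]; ring
  simp only [hexpand]
  exact integrable_finsetSum _ fun k _ => (integrable_pow_mul_exp_neg_mul_sq hκ _).const_mul _

lemma integrable_saddleGaussian_mul_saddleRemainder (x : ℂ) {κ : ℝ} (hκ : 0 < κ) (hζ₁ : 1 ≤ ‖ζ‖)
    (hζ : κ * ‖ζ‖ ^ 2 ≤ (ζ ^ 2).re) (N : ℕ) :
    Integrable fun u : ℝ => saddleGaussian x (ζ * u) * saddleRemainder x ζ (ζ * u) N := by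
  have hdom := (integrable_one_add_pow_four_pow_mul_exp (mul_pos two_pos hκ) N).comp_mul_left'
    (R := ‖ζ‖) (by positivity)
  refine ((hdom.const_mul _).const_mul _).mono' ?_ (Eventually.of_forall fun u =>
    norm_saddleGaussian_mul_saddleRemainder_le x hκ hζ₁ hζ N u)
  simp only [saddleGaussian, saddleRemainder, heatRemainder, heatPolynomial]
  fun_prop

lemma exists_norm_integral_saddleGaussian_mul_saddleRemainder_le (x : ℂ) {κ : ℝ} (hκ : 0 < κ)
    (N : ℕ) :
    ∃ C, ∀ ζ : ℂ, 1 ≤ ‖ζ‖ → κ * ‖ζ‖ ^ 2 ≤ (ζ ^ 2).re →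
      ‖ζ * ∫ u : ℝ, saddleGaussian x (ζ * u) * saddleRemainder x ζ (ζ * u) N‖ ≤ C * ‖ζ‖⁻¹ ^ N := by
  set g : ℝ → ℝ := fun σ => (1 + σ ^ 4) ^ N * exp (-(2 * κ) * σ ^ 2)
  have hgint : Integrable g := integrable_one_add_pow_four_pow_mul_exp (mul_pos two_pos hκ) N
  refine ⟨exp (‖x‖ ^ 2 / (4 * κ)) * (3 * (4 + ‖x‖)) ^ N * ∫ σ, g σ, fun ζ hζ₁ hζ => ?_⟩
  have hζ₀ : ‖ζ‖ ≠ 0 := by positivity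
  have hbound := norm_integral_le_of_norm_le
    (((hgint.comp_mul_left' hζ₀).const_mul _).const_mul _) (Eventually.of_forall fun u =>
    norm_saddleGaussian_mul_saddleRemainder_le x hκ hζ₁ hζ N u)
  rw [integral_const_mul, integral_const_mul, Measure.integral_comp_mul_left, smul_eq_mul,
    abs_of_nonneg (by positivity)] at hbound
  rw [norm_mul]
  refine (mul_le_mul_of_nonneg_left hbound (norm_nonneg ζ)).trans_eq ?_
  field_simp

lemma saddleIntegral_sub_sum (x : ℂ) {κ : ℝ} (hκ : 0 < κ) (hre : 0 < ζ.re) (hζ₁ : 1 ≤ ‖ζ‖)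
    (hζ : κ * ‖ζ‖ ^ 2 ≤ (ζ ^ 2).re) (N : ℕ) :
    saddleIntegral x ζ - √(π / 6) * Complex.exp (x ^ 2 / 6) *
        ∑ n ∈ range N, ζ⁻¹ ^ n * ((cbrtTwo ^ (4 * n))⁻¹ * A x n) =
      ζ * ∫ u : ℝ, saddleGaussian x (ζ * u) * saddleRemainder x ζ (ζ * u) N := by
  have hre2 : 0 < (ζ ^ 2).re := lt_of_lt_of_le (by positivity) hζ
  have hterm (n : ℕ) : Integrable fun u : ℝ =>
      ζ⁻¹ ^ n * (saddleGaussian x (ζ * u) * saddleCoeff x (ζ * u) n) :=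
    (integrable_saddleGaussian_mul_saddleCoeff hre2 x n).const_mul _
  have hsplit (u : ℝ) : saddleGaussian x (ζ * u) * saddleRemainder x ζ (ζ * u) N =
      saddleGaussian x (ζ * u) * saddleRemainder x ζ (ζ * u) 0 -
        ∑ n ∈ range N, ζ⁻¹ ^ n * (saddleGaussian x (ζ * u) * saddleCoeff x (ζ * u) n) := by
    rw [saddleRemainder_eq_sub_sum _ _ _ N, mul_sub, mul_sum]
    simp only [mul_left_comm]
  simp only [hsplit]
  rw [integral_sub (integrable_saddleGaussian_mul_saddleRemainder x hκ hζ₁ hζ 0)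
    (integrable_finsetSum _ fun n _ => hterm n), mul_sub,
    ← saddleIntegral_eq x (norm_pos_iff.1 (by linarith)), integral_finsetSum _ fun n _ => hterm n,
    mul_sum, mul_sum]
  congr 1
  refine sum_congr rfl fun n _ => ?_
  rw [integral_const_mul, mul_left_comm, mul_left_comm ζ,
    integral_saddleGaussian_mul_saddleCoeff hre hre2]

lemma re_pow_eq_norm_pow_mul_cos (z : ℂ) (n : ℕ) : (z ^ n).re = ‖z‖ ^ n * cos (n * z.arg) := by
  conv_lhs => rw [← Complex.norm_mul_exp_arg_mul_I z, mul_pow, ← Complex.exp_nat_mul]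
  rw [← Complex.ofReal_pow, Complex.re_ofReal_mul, ← mul_assoc, ← Complex.ofReal_natCast,
    ← Complex.ofReal_mul, Complex.exp_ofReal_mul_I_re]

lemma exists_pos_forall_mul_norm_sq_le_re_sq {α : ℝ} (hα : α < π / 4) :
    ∃ κ > 0, ∀ ζ : ℂ, |ζ.arg| ≤ α → κ * ‖ζ‖ ^ 2 ≤ (ζ ^ 2).re := by
  refine ⟨cos (2 * max α 0), cos_pos_of_mem_Ioo ⟨?_, ?_⟩, fun ζ hζ => ?_⟩
  · linarith [le_max_right α 0, pi_pos]
  · linarith [max_lt hα (div_pos pi_pos four_pos)]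
  · rw [re_pow_eq_norm_pow_mul_cos, mul_comm, ← cos_abs ((2 : ℕ) * _), abs_mul, Nat.abs_cast,
      Nat.cast_ofNat, max_eq_left ((abs_nonneg _).trans hζ)]
    gcongr
    exact cos_le_cos_of_nonneg_of_le_pi (by positivity) (by linarith [pi_pos]) (by linarith)

lemma isBigO_saddleIntegral_sub_sum (x : ℂ) {α : ℝ} (hα : α < π / 4) (N : ℕ) :
    (fun ζ => saddleIntegral x ζ - √(π / 6) * Complex.exp (x ^ 2 / 6) *
        ∑ n ∈ range N, ζ⁻¹ ^ n * ((cbrtTwo ^ (4 * n))⁻¹ * A x n))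
      =O[Bornology.cobounded ℂ ⊓ 𝓟 {ζ | |ζ.arg| ≤ α}] fun ζ => ‖ζ‖⁻¹ ^ N := by
  obtain ⟨κ, hκ, hsector⟩ := exists_pos_forall_mul_norm_sq_le_re_sq hα
  obtain ⟨C, hC⟩ := exists_norm_integral_saddleGaussian_mul_saddleRemainder_le x hκ N
  refine IsBigO.of_bound C (eventually_inf_principal.2 ?_)
  filter_upwards [tendsto_norm_cobounded_atTop.eventually_ge_atTop 1] with ζ hζ₁ hζ
  have hζ₀ : ζ ≠ 0 := norm_pos_iff.1 (by linarith)
  have hre : 0 < ζ.re := (Complex.abs_arg_lt_pi_div_two_iff.1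
    (lt_of_le_of_lt hζ (by linarith [pi_pos]))).resolve_right hζ₀
  rw [saddleIntegral_sub_sum x hκ hre hζ₁ (hsector ζ hζ), norm_of_nonneg (by positivity)]
  exact hC ζ hζ₁ (hsector ζ hζ)

end Laplace

section ContourRotation

open scoped Topology

variable {f : ℂ → ℂ} {S : ℂ} {g : ℝ → ℝ}

lemma differentiableAt_integral_comp_mul_ofReal (hf : Differentiable ℂ f) (hg : Integrable g)
    (hfg : ∀ᶠ T in 𝓝 S, ∀ u : ℝ, ‖f (T * u)‖ ≤ g u) :
    DifferentiableAt ℂ (fun T => ∫ u : ℝ, f (T * u)) S := by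
  obtain ⟨ε, hε, hball⟩ := Metric.eventually_nhds_iff_ball.1 hfg
  have hε2 : 0 < ε / 2 := half_pos hε
  have hderiv (u : ℝ) (T : ℂ) : HasDerivAt (fun T => f (T * u)) (deriv f (T * u) * u) T :=
    (hf (T * u)).hasDerivAt.comp T (hasDerivAt_mul_const (u : ℂ))
  have hcont (T : ℂ) : Continuous fun u : ℝ => f (T * u) :=
    hf.continuous.comp (continuous_const.mul Complex.continuous_ofReal)
  have hcont' : Continuous fun u : ℝ => deriv f (S * u) * u :=
    ((hf.contDiff.continuous_deriv le_top).comp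
      (continuous_const.mul Complex.continuous_ofReal)).mul Complex.continuous_ofReal
  have hcauchy (u : ℝ) (T : ℂ) (hT : T ∈ Metric.ball S (ε / 2)) :
      ‖deriv f (T * u) * u‖ ≤ g u / (ε / 2) := by
    rw [← (hderiv u T).deriv]
    refine Complex.norm_deriv_le_of_forall_mem_sphere_norm_le hε2
      (Differentiable.diffContOnCl fun z => (hderiv u z).differentiableAt) fun z hz =>
      hball z ?_ u
    rw [Metric.mem_sphere] at hz
    rw [Metric.mem_ball] at hT ⊢
    linarith [dist_triangle z T S]
  exact (hasDerivAt_integral_of_dominated_loc_of_deriv_le (Metric.ball_mem_nhds S hε2)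
    (Eventually.of_forall fun T => (hcont T).aestronglyMeasurable)
    (hg.mono' (hcont S).aestronglyMeasurable
      (Eventually.of_forall (hball S (Metric.mem_ball_self hε))))
    hcont'.aestronglyMeasurable (Eventually.of_forall hcauchy) (hg.div_const (ε / 2))
    (Eventually.of_forall fun u T _ => hderiv u T)).2.differentiableAt

lemma ofReal_mul_mul_integral_comp_mul (f : ℂ → ℂ) (S : ℂ) {t : ℝ} (ht : 0 < t) :
    t * S * ∫ u : ℝ, f (t * S * u) = S * ∫ u : ℝ, f (S * u) := by
  have hscale := Measure.integral_comp_mul_left (fun u : ℝ => f (S * u)) t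
  rw [abs_of_pos (inv_pos.2 ht), Complex.real_smul, Complex.ofReal_inv] at hscale
  have ht₀ : (t : ℂ) ≠ 0 := mod_cast ht.ne'
  calc t * S * ∫ u : ℝ, f (t * S * u) = t * S * ∫ u : ℝ, f (S * (t * u : ℝ)) := by
        simp only [Complex.ofReal_mul, mul_left_comm S, mul_assoc]
    _ = S * ∫ u : ℝ, f (S * u) := by
        rw [hscale]
        field_simp

/-- A holomorphic function of `S` that is constant along rays is locally constant. -/
lemma hasDerivAt_mul_integral_comp_mul (hf : Differentiable ℂ f) (hS : S ≠ 0) (hg : Integrable g)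
    (hfg : ∀ᶠ T in 𝓝 S, ∀ u : ℝ, ‖f (T * u)‖ ≤ g u) :
    HasDerivAt (fun T => T * ∫ u : ℝ, f (T * u)) 0 S := by
  have hφ := (differentiableAt_id.fun_mul
    (differentiableAt_integral_comp_mul_ofReal hf hg hfg)).hasDerivAt
  have hray : HasDerivAt (fun t : ℝ => (t * S : ℂ)) S 1 := by
    simpa using (hasDerivAt_id (1 : ℝ)).ofReal_comp.mul_const S
  have hφray := (hasDerivAt_const (1 : ℝ) (S * ∫ u : ℝ, f (S * u))).congr_of_eventuallyEq
    ((eventually_gt_nhds zero_lt_one).mono fun t ht => ofReal_mul_mul_integral_comp_mul f S ht)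
  have hzero := (hφ.comp_of_eq (1 : ℝ) hray (by simp)).unique hφray
  rwa [(mul_eq_zero.1 hzero).resolve_right hS] at hφ

lemma mul_integral_comp_mul_eq (hf : Differentiable ℂ f) {U : Set ℂ} (hU : IsOpen U)
    (hUconn : IsPreconnected U) (hU₀ : 0 ∉ U)
    (hdom : ∀ S ∈ U, ∃ g : ℝ → ℝ, Integrable g ∧ ∀ᶠ T in 𝓝 S, ∀ u : ℝ, ‖f (T * u)‖ ≤ g u)
    {T : ℂ} (hS : S ∈ U) (hT : T ∈ U) :
    S * ∫ u : ℝ, f (S * u) = T * ∫ u : ℝ, f (T * u) := by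
  have hderiv (z : ℂ) (hz : z ∈ U) : HasDerivAt (fun T => T * ∫ u : ℝ, f (T * u)) 0 z := by
    obtain ⟨g, hg, hfg⟩ := hdom z hz
    exact hasDerivAt_mul_integral_comp_mul hf (ne_of_mem_of_not_mem hz hU₀) hg hfg
  exact hU.is_const_of_deriv_eq_zero hUconn
    (fun z hz => (hderiv z hz).differentiableAt.differentiableWithinAt)
    (fun z hz => (hderiv z hz).deriv) hS hT

end ContourRotation

section PearceyIntegrand

open scoped Topology

/-- The integrand `exp (-z⁴ - x z² + i y z)` of the Pearcey integral over the whole real line, of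
which `P x y` is one half. -/
noncomputable def pearceyIntegrand (x y z : ℂ) : ℂ :=
  Complex.exp (-z ^ 4 - x * z ^ 2 + Complex.I * y * z)

lemma differentiable_pearceyIntegrand (x y : ℂ) : Differentiable ℂ (pearceyIntegrand x y) := by
  unfold pearceyIntegrand
  fun_prop

lemma norm_pearceyIntegrand_mul_ofReal_le (x y T : ℂ) (u : ℝ) :
    ‖pearceyIntegrand x y (T * u)‖ ≤
      exp (-(T ^ 4).re * u ^ 4 + ‖x‖ * ‖T‖ ^ 2 * u ^ 2 + ‖y‖ * ‖T‖ * |u|) := by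
  have hquartic : ((T * u) ^ 4).re = (T ^ 4).re * u ^ 4 := by
    rw [mul_pow, ← Complex.ofReal_pow, Complex.re_mul_ofReal]
  have hquad : -(x * (T * u) ^ 2).re ≤ ‖x‖ * ‖T‖ ^ 2 * u ^ 2 := by
    refine (neg_le_abs _).trans ((Complex.abs_re_le_norm _).trans_eq ?_)
    rw [norm_mul, norm_pow, norm_mul, Complex.norm_real, norm_eq_abs, mul_pow, sq_abs, mul_assoc]
  have hlin : (Complex.I * y * (T * u)).re ≤ ‖y‖ * ‖T‖ * |u| := by
    refine (Complex.re_le_norm _).trans_eq ?_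
    rw [norm_mul, norm_mul, norm_mul, Complex.norm_I, one_mul, Complex.norm_real, norm_eq_abs,
      mul_assoc]
  rw [pearceyIntegrand, Complex.norm_exp, exp_le_exp, Complex.add_re, Complex.sub_re,
    Complex.neg_re, hquartic]
  linarith

lemma exists_exp_quartic_le {q : ℝ} (hq : 0 < q) (b : ℝ) {d : ℝ} (hd : 0 ≤ d) :
    ∃ C, ∀ u, exp (-q * u ^ 4 + b * u ^ 2 + d * |u|) ≤ C * exp (-u ^ 2) := by
  refine ⟨exp (d + (b + d + 1) ^ 2 / (4 * q)), fun u => ?_⟩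
  have hlin : d * |u| ≤ d * (1 + u ^ 2) := by
    gcongr
    nlinarith [sq_abs u, sq_nonneg (|u| - 1)]
  have hquad : (b + d + 1) * u ^ 2 - q * u ^ 4 ≤ (b + d + 1) ^ 2 / (4 * q) := by
    rw [le_div_iff₀ (by positivity)]
    linear_combination sq_nonneg (2 * q * u ^ 2 - (b + d + 1))
  rw [← exp_add, exp_le_exp]
  linarith

lemma exists_integrable_bound_pearceyIntegrand (x y : ℂ) {S : ℂ} (hS : 0 < (S ^ 4).re) :
    ∃ g : ℝ → ℝ, Integrable g ∧ ∀ᶠ T in 𝓝 S, ∀ u : ℝ, ‖pearceyIntegrand x y (T * u)‖ ≤ g u := by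
  have hre : ContinuousAt (fun T : ℂ => (T ^ 4).re) S := by fun_prop
  have hnorm : ContinuousAt (fun T : ℂ => ‖T‖) S := by fun_prop
  have hgauss : Integrable fun u : ℝ => exp (-u ^ 2) := by
    simpa using integrable_exp_neg_mul_sq one_pos
  obtain ⟨C, hC⟩ := exists_exp_quartic_le (half_pos hS) (‖x‖ * (‖S‖ + 1) ^ 2)
    (d := ‖y‖ * (‖S‖ + 1)) (by positivity)
  refine ⟨fun u => C * exp (-u ^ 2), hgauss.const_mul C, ?_⟩
  filter_upwards [hre.eventually_const_lt (half_lt_self hS), hnorm.eventually_lt_const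
    (lt_add_one ‖S‖)] with T hTre hTnorm u
  refine (norm_pearceyIntegrand_mul_ofReal_le x y T u).trans (le_trans ?_ (hC u))
  gcongr

/-- The open sector `|arg T| < π / 8`, on which `T⁴` stays in the right half-plane. -/
def pearceySector : Set ℂ := Complex.exp '' {z | |z.im| < π / 8}

lemma mem_pearceySector {T : ℂ} (hT₀ : T ≠ 0) (hT : |T.arg| < π / 8) : T ∈ pearceySector :=
  ⟨Complex.log T, by simpa [Complex.log_im] using hT, Complex.exp_log hT₀⟩

lemma isOpen_pearceySector : IsOpen pearceySector :=
  Complex.isOpenMap_exp _ (isOpen_lt (by fun_prop) continuous_const)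

lemma isPreconnected_pearceySector : IsPreconnected pearceySector := by
  have hstrip : Convex ℝ {z : ℂ | |z.im| < π / 8} := by
    simp only [abs_lt, Set.ofPred_and]
    exact (convex_halfSpace_im_gt _).inter (convex_halfSpace_im_lt _)
  exact hstrip.isPreconnected.image _ Complex.continuous_exp.continuousOn

lemma re_pow_four_pos_of_mem_pearceySector {T : ℂ} (hT : T ∈ pearceySector) : 0 < (T ^ 4).re := by
  obtain ⟨z, hz, rfl⟩ := hT
  obtain ⟨hz₁, hz₂⟩ := abs_lt.1 (Set.mem_ofPred.1 hz)
  have him : ((4 : ℕ) * z).im = 4 * z.im := by simp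
  rw [← Complex.exp_nat_mul, Complex.exp_re, him]
  exact mul_pos (exp_pos _) (cos_pos_of_mem_Ioo (by constructor <;> linarith))

lemma integral_pearceyIntegrand_eq (x y : ℂ) {T : ℂ} (hT₀ : T ≠ 0) (hT : |T.arg| < π / 8) :
    ∫ u : ℝ, pearceyIntegrand x y u = T * ∫ u : ℝ, pearceyIntegrand x y (T * u) := by
  have h := mul_integral_comp_mul_eq (differentiable_pearceyIntegrand x y) isOpen_pearceySector
    isPreconnected_pearceySector (fun ⟨z, _, hz⟩ => Complex.exp_ne_zero z hz)
    (fun S hS => exists_integrable_bound_pearceyIntegrand x y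
      (re_pow_four_pos_of_mem_pearceySector hS))
    (mem_pearceySector one_ne_zero (by simp [pi_pos])) (mem_pearceySector hT₀ hT)
  simpa only [one_mul] using h

lemma integrable_pearceyIntegrand (x y : ℂ) : Integrable fun u : ℝ => pearceyIntegrand x y u := by
  obtain ⟨g, hg, hbound⟩ := exists_integrable_bound_pearceyIntegrand x y (S := 1) (by simp)
  refine hg.mono' ?_ (Eventually.of_forall fun u => ?_)
  · exact ((differentiable_pearceyIntegrand x y).continuous.comp
      Complex.continuous_ofReal).aestronglyMeasurable
  · simpa using hbound.self_of_nhds u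

lemma P_eq_half_integral_pearceyIntegrand (x y : ℂ) :
    P x y = 1 / 2 * ∫ t : ℝ, pearceyIntegrand x y t := by
  have hint := integrable_pearceyIntegrand x y
  have hneg : ∫ t in Set.Iic (0 : ℝ), pearceyIntegrand x y t =
      ∫ t in Set.Ioi (0 : ℝ), pearceyIntegrand x y ((-t : ℝ) : ℂ) := by
    simpa using (integral_comp_neg_Ioi 0 fun t : ℝ => pearceyIntegrand x y t).symm
  have hcos (t : ℝ) : Complex.exp (-(t : ℂ) ^ 4 - x * (t : ℂ) ^ 2) * Complex.cos (y * t) =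
      1 / 2 * (pearceyIntegrand x y ((-t : ℝ) : ℂ) + pearceyIntegrand x y t) := by
    have hplus : Complex.I * y * t = y * t * Complex.I := by ring
    have hminus : Complex.I * y * ((-t : ℝ) : ℂ) = -(y * t) * Complex.I := by push_cast; ring
    rw [Complex.cos, pearceyIntegrand, pearceyIntegrand, hplus, hminus, Complex.exp_add,
      Complex.exp_add, Complex.ofReal_neg, Even.neg_pow (by decide), neg_sq]
    ring
  rw [P, ← intervalIntegral.integral_Iic_add_Ioi (b := 0) hint.integrableOn hint.integrableOn,
    hneg, ← integral_add hint.comp_neg.integrableOn hint.integrableOn, ← integral_const_mul]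
  simp only [hcos]

end PearceyIntegrand

section Saddle

variable {y : ℂ}

/-- The saddle point of `exp (-t⁴ + i y t)` that contributes to the expansion: the solution of
`4 t³ = i y` with argument `(arg y + π / 2) / 3`. -/
noncomputable def saddle (y : ℂ) : ℂ :=
  Complex.exp (π * Complex.I / 6) * y ^ (1 / 3 : ℂ) / cbrtTwo ^ 2

lemma exp_pi_mul_I_div_six_pow_three : Complex.exp (π * Complex.I / 6) ^ 3 = Complex.I := by
  rw [← Complex.exp_nat_mul]
  refine Eq.trans ?_ Complex.exp_pi_div_two_mul_I
  congr 1
  push_cast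
  ring

lemma cpow_one_third_ne_zero (hy : y ≠ 0) : y ^ (1 / 3 : ℂ) ≠ 0 := by
  simp [Complex.cpow_eq_zero_iff, hy]

lemma saddle_ne_zero (hy : y ≠ 0) : saddle y ≠ 0 :=
  div_ne_zero (mul_ne_zero (Complex.exp_ne_zero _) (cpow_one_third_ne_zero hy))
    (pow_ne_zero _ cbrtTwo_ne_zero)

lemma four_mul_saddle_pow_three (y : ℂ) : 4 * saddle y ^ 3 = Complex.I * y := by
  rw [saddle, div_pow, mul_pow, exp_pi_mul_I_div_six_pow_three,
    ← cpow_eq_cpow_one_third_pow y (s := 1) (by norm_num), Complex.cpow_one, pow_right_comm,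
    cbrtTwo_pow_three]
  ring

lemma arg_saddle (hy : y ≠ 0) : (saddle y).arg = (y.arg + π / 2) / 3 := by
  have hexp : saddle y = Complex.exp (π * Complex.I / 6 + Complex.log y * (1 / 3) -
      2 * (Complex.log 2 * (1 / 3))) := by
    rw [saddle, cbrtTwo, Complex.cpow_def_of_ne_zero hy, Complex.cpow_def_of_ne_zero two_ne_zero,
      Complex.exp_sub, Complex.exp_add, ← Complex.exp_nat_mul, Nat.cast_ofNat]
  have him : (π * Complex.I / 6 + Complex.log y * (1 / 3) -
      2 * (Complex.log 2 * (1 / 3))).im = (y.arg + π / 2) / 3 := by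
    simp only [mul_one_div, Complex.sub_im, Complex.add_im, Complex.div_ofNat_im, Complex.mul_im,
      Complex.I_re, Complex.I_im, Complex.ofReal_re, Complex.ofReal_im, Complex.re_ofNat,
      Complex.im_ofNat, Complex.log_im, Complex.ofNat_arg, zero_mul, zero_div, mul_zero, add_zero]
    ring
  rw [hexp, Complex.arg_exp, him, toIocMod_eq_self]
  constructor <;> linarith [y.neg_pi_lt_arg, y.arg_le_pi, pi_pos]

lemma norm_saddle (y : ℂ) : ‖saddle y‖ = (‖y‖ / 4) ^ (1 / 3 : ℝ) := by
  have hcube : ‖saddle y‖ ^ 3 = ‖y‖ / 4 := by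
    have h := congrArg norm (four_mul_saddle_pow_three y)
    rw [norm_mul, norm_mul, norm_pow, Complex.norm_I, Complex.norm_ofNat] at h
    linarith
  rw [← hcube, ← rpow_natCast, ← rpow_mul (norm_nonneg _)]
  norm_num

lemma arg_saddle_sq (hy : y ≠ 0) (hsector : |y.arg + π / 2| < 3 * π / 8) :
    (saddle y ^ 2).arg = 2 / 3 * (y.arg + π / 2) := by
  obtain ⟨h₁, h₂⟩ := abs_lt.1 hsector
  rw [sq, Complex.arg_mul (saddle_ne_zero hy) (saddle_ne_zero hy), arg_saddle hy]
  · ring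
  · rw [arg_saddle hy]
    constructor <;> linarith [pi_pos]

lemma pearceyIntegrand_mul_one_add (x : ℂ) {T : ℂ} (hT : 4 * T ^ 3 = Complex.I * y) (s : ℂ) :
    pearceyIntegrand x y (T * (1 + s)) = Complex.exp (3 * T ^ 4 - x * T ^ 2) *
      Complex.exp (-(T ^ 2) ^ 2 * (s ^ 4 + 4 * s ^ 3 + 6 * s ^ 2) -
        x * T ^ 2 * (s ^ 2 + 2 * s)) := by
  rw [pearceyIntegrand, ← hT, ← Complex.exp_add]
  congr 1
  ring

lemma P_eq_saddleIntegral (x : ℂ) (hy : y ≠ 0) (hsector : |y.arg + π / 2| < 3 * π / 8) :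
    P x y = Complex.exp (3 * saddle y ^ 4 - x * saddle y ^ 2) / (2 * saddle y) *
      saddleIntegral x (saddle y ^ 2) := by
  have hT₀ := saddle_ne_zero hy
  have harg : |(saddle y).arg| < π / 8 := by
    rw [arg_saddle hy, abs_div, abs_of_pos (a := (3 : ℝ)) three_pos]
    linarith
  have hshift := integral_add_left_eq_self (μ := volume)
    (fun u : ℝ => pearceyIntegrand x y (saddle y * u)) 1
  rw [P_eq_half_integral_pearceyIntegrand, integral_pearceyIntegrand_eq x y hT₀ harg, ← hshift,
    saddleIntegral]
  simp only [Complex.ofReal_add, Complex.ofReal_one,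
    pearceyIntegrand_mul_one_add x (four_mul_saddle_pow_three y), integral_const_mul]
  field_simp

end Saddle

section Normalization

variable {y : ℂ}

lemma four_cpow_eq_cbrtTwo_pow_inv {s : ℂ} {n : ℕ} (hs : s = -(2 * n / 3)) :
    (4 : ℂ) ^ s = (cbrtTwo ^ (4 * n))⁻¹ := by
  have hfour : (4 : ℂ) ^ (1 / 3 : ℂ) = cbrtTwo ^ 2 := by
    rw [cbrtTwo, sq, show (4 : ℂ) = (2 : ℕ) * (2 : ℕ) by norm_num,
      Complex.natCast_mul_natCast_cpow, Nat.cast_ofNat]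
  rw [hs, Complex.cpow_neg, cpow_eq_cpow_one_third_pow 4 (n := 2 * n) (by push_cast; ring), hfour,
    ← pow_mul, show 2 * (2 * n) = 4 * n by ring]

lemma two_rpow_div_sqrt_eq : (((2 : ℝ) ^ ((5 : ℝ) / 6) / √(π / 3) : ℝ) : ℂ) =
    cbrtTwo / √(π / 6) := by
  have hcbrt : cbrtTwo = ((2 : ℝ) ^ (1 / 3 : ℝ) : ℝ) := by
    rw [Complex.ofReal_cpow zero_le_two, cbrtTwo]
    norm_num
  have hsqrt : √(π / 3) = √2 * √(π / 6) := by
    rw [← sqrt_mul zero_le_two]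
    ring_nf
  have hrpow : (2 : ℝ) ^ ((5 : ℝ) / 6) = √2 * (2 : ℝ) ^ (1 / 3 : ℝ) := by
    rw [sqrt_eq_rpow, ← rpow_add two_pos]
    norm_num
  rw [hcbrt, ← Complex.ofReal_div, hsqrt, hrpow, mul_div_mul_left _ _ (by positivity)]

lemma saddle_exponent_eq (x y : ℂ) :
    -3 * (4 : ℂ) ^ (-(4 : ℂ) / 3) * Complex.exp (2 * (π : ℂ) * Complex.I / 3) * y ^ ((4 : ℂ) / 3)
      + (4 : ℂ) ^ (-(2 : ℂ) / 3) * x * y ^ ((2 : ℂ) / 3) * Complex.exp ((π : ℂ) * Complex.I / 3) =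
    -(3 * saddle y ^ 4 - x * saddle y ^ 2) := by
  have hexp₄ : Complex.exp (2 * π * Complex.I / 3) = Complex.exp (π * Complex.I / 6) ^ 4 := by
    rw [← Complex.exp_nat_mul]
    ring_nf
  have hexp₂ : Complex.exp (π * Complex.I / 3) = Complex.exp (π * Complex.I / 6) ^ 2 := by
    rw [← Complex.exp_nat_mul]
    ring_nf
  rw [hexp₄, hexp₂, four_cpow_eq_cbrtTwo_pow_inv (s := -4 / 3) (n := 2) (by norm_num),
    four_cpow_eq_cbrtTwo_pow_inv (s := -2 / 3) (n := 1) (by norm_num),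
    cpow_eq_cpow_one_third_pow y (s := 4 / 3) (n := 4) (by norm_num),
    cpow_eq_cpow_one_third_pow y (s := 2 / 3) (n := 2) (by norm_num), saddle]
  have hτ := cbrtTwo_ne_zero
  field_simp
  ring

lemma normalized_P_eq (x : ℂ) (hy : y ≠ 0) (hsector : |y.arg + π / 2| < 3 * π / 8) :
    P x y * (((2 : ℝ) ^ ((5 : ℝ) / 6) / √(π / 3) : ℝ) : ℂ) * y ^ ((1 : ℂ) / 3) *
        Complex.exp
          (-3 * (4 : ℂ) ^ (-(4 : ℂ) / 3) * Complex.exp (2 * (π : ℂ) * Complex.I / 3) *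
              y ^ ((4 : ℂ) / 3)
            + (4 : ℂ) ^ (-(2 : ℂ) / 3) * x * y ^ ((2 : ℂ) / 3) *
              Complex.exp ((π : ℂ) * Complex.I / 3)
            - x ^ 2 / 6) =
      (Complex.exp (π * Complex.I / 6) * (√(π / 6) * Complex.exp (x ^ 2 / 6)))⁻¹ *
        saddleIntegral x (saddle y ^ 2) := by
  have hcbrt : y ^ ((1 : ℂ) / 3) =
      cbrtTwo ^ 2 * saddle y / Complex.exp (π * Complex.I / 6) := by
    have hτ := cbrtTwo_ne_zero
    rw [saddle]
    field_simp
  have hexp : Complex.exp (-(3 * saddle y ^ 4 - x * saddle y ^ 2) - x ^ 2 / 6) =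
      (Complex.exp (3 * saddle y ^ 4 - x * saddle y ^ 2))⁻¹ * (Complex.exp (x ^ 2 / 6))⁻¹ := by
    rw [sub_eq_add_neg _ (x ^ 2 / 6), Complex.exp_add, Complex.exp_neg, Complex.exp_neg]
  rw [P_eq_saddleIntegral x hy hsector, two_rpow_div_sqrt_eq, saddle_exponent_eq, hexp, hcbrt]
  have hT₀ := saddle_ne_zero hy
  field_simp
  rw [cbrtTwo_pow_three, mul_comm]

lemma expansion_term_eq (x y : ℂ) (n : ℕ) :
    Complex.exp (-(2 * (n : ℂ) + 1) * (π : ℂ) * Complex.I / 6) * A x n *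
        y ^ (-(2 * (n : ℂ)) / 3) =
      (Complex.exp (π * Complex.I / 6))⁻¹ *
        ((saddle y ^ 2)⁻¹ ^ n * ((cbrtTwo ^ (4 * n))⁻¹ * A x n)) := by
  have hexp : Complex.exp (-(2 * (n : ℂ) + 1) * (π : ℂ) * Complex.I / 6) =
      (Complex.exp (π * Complex.I / 6) ^ (2 * n + 1))⁻¹ := by
    rw [← Complex.exp_nat_mul, ← Complex.exp_neg]
    congr 1
    push_cast
    ring
  have hy : y ^ (-(2 * (n : ℂ)) / 3) = ((y ^ (1 / 3 : ℂ)) ^ (2 * n))⁻¹ := by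
    rw [neg_div, Complex.cpow_neg, cpow_eq_cpow_one_third_pow y (n := 2 * n) (by push_cast; rfl)]
  have hτ := cbrtTwo_ne_zero
  rw [hexp, hy, saddle, inv_pow, ← pow_mul, div_pow, mul_pow, ← pow_mul,
    show 2 * (2 * n) = 4 * n by ring, pow_succ]
  field_simp

end Normalization

section SaddleAsymptotics

lemma inv_norm_saddle_sq_pow (y : ℂ) (n : ℕ) :
    ‖saddle y ^ 2‖⁻¹ ^ n = (4 : ℝ) ^ (2 * (n : ℝ) / 3) * ‖y‖ ^ (-(2 * (n : ℝ)) / 3) := by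
  have hpow : ‖saddle y ^ 2‖⁻¹ ^ n = (‖y‖ / 4) ^ (-(2 * (n : ℝ) / 3)) := by
    rw [norm_pow, norm_saddle, inv_pow, ← pow_mul, ← rpow_natCast, ← rpow_mul (by positivity),
      rpow_neg (by positivity)]
    push_cast
    ring_nf
  rw [hpow, div_rpow (norm_nonneg y) zero_le_four, rpow_neg zero_le_four, div_inv_eq_mul, mul_comm,
    neg_div]

lemma tendsto_norm_saddle_sq :
    Tendsto (fun y => ‖saddle y ^ 2‖) (Bornology.cobounded ℂ) atTop := by
  simp only [norm_pow, norm_saddle]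
  exact (tendsto_pow_atTop two_ne_zero).comp <| (tendsto_rpow_atTop (by norm_num)).comp <|
    tendsto_norm_cobounded_atTop.atTop_div_const (by norm_num)

lemma eventually_ne_zero_and_abs_arg_add_le (β : ℝ) :
    ∀ᶠ y in Bornology.cobounded ℂ ⊓ 𝓟 {y : ℂ | |y.arg + π / 2| ≤ β},
      y ≠ 0 ∧ |y.arg + π / 2| ≤ β :=
  ((Bornology.eventually_ne_cobounded 0).filter_mono inf_le_left).and
    ((eventually_principal.2 fun _ h => h).filter_mono inf_le_right)

lemma tendsto_saddle_sq {β : ℝ} (hβ : β < 3 * π / 8) :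
    Tendsto (fun y => saddle y ^ 2)
      (Bornology.cobounded ℂ ⊓ 𝓟 {y | |y.arg + π / 2| ≤ β})
      (Bornology.cobounded ℂ ⊓ 𝓟 {ζ | |ζ.arg| ≤ 2 / 3 * β}) := by
  refine tendsto_inf.2 ⟨?_, tendsto_principal.2 ?_⟩
  · exact (tendsto_norm_atTop_iff_cobounded.1 tendsto_norm_saddle_sq).mono_left inf_le_left
  · filter_upwards [eventually_ne_zero_and_abs_arg_add_le β] with y ⟨hy, hsector⟩
    rw [arg_saddle_sq hy (hsector.trans_lt hβ), abs_mul, abs_of_pos (by norm_num)]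
    gcongr

end SaddleAsymptotics

section Ray

lemma norm_ofReal_mul_exp_I_mul {r : ℝ} (hr : 0 ≤ r) (θ : ℝ) :
    ‖(r : ℂ) * Complex.exp (Complex.I * θ)‖ = r := by
  rw [norm_mul, Complex.norm_exp_I_mul_ofReal, mul_one, Complex.norm_of_nonneg hr]

lemma arg_ofReal_mul_exp_I_mul {r θ : ℝ} (hr : 0 < r) (hθ : θ ∈ Set.Ioc (-π) π) :
    ((r : ℂ) * Complex.exp (Complex.I * θ)).arg = θ := by
  rw [mul_comm Complex.I, Complex.exp_mul_I, Complex.arg_mul_cos_add_sin_mul_I hr hθ]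

lemma tendsto_ofReal_mul_exp_I_mul {p : ℝ → Prop} {θ : ℝ} (hθ : θ ∈ Set.Ioc (-π) π)
    (hpθ : p θ) :
    Tendsto (fun r : ℝ => (r : ℂ) * Complex.exp (Complex.I * θ)) atTop
      (Bornology.cobounded ℂ ⊓ 𝓟 {y | p y.arg}) := by
  refine tendsto_inf.2 ⟨tendsto_norm_atTop_iff_cobounded.1 ?_, tendsto_principal.2 ?_⟩
  · refine tendsto_id.congr' ?_
    filter_upwards [eventually_ge_atTop 0] with r hr
    rw [id, norm_ofReal_mul_exp_I_mul hr]
  · filter_upwards [eventually_gt_atTop 0] with r hr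
    rwa [arg_ofReal_mul_exp_I_mul hr hθ]

lemma isBigO_comp_ofReal_mul_exp_I_mul {p : ℝ → Prop} {f : ℂ → ℂ} {g : ℝ → ℝ}
    (hfg : f =O[Bornology.cobounded ℂ ⊓ 𝓟 {y | p y.arg}] fun y => g ‖y‖) {θ : ℝ}
    (hθ : θ ∈ Set.Ioc (-π) π) (hpθ : p θ) :
    (fun r : ℝ => f ((r : ℂ) * Complex.exp (Complex.I * θ))) =O[atTop] g := by
  refine (hfg.comp_tendsto (tendsto_ofReal_mul_exp_I_mul hθ hpθ)).trans_eventuallyEq ?_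
  filter_upwards [eventually_ge_atTop 0] with r hr
  rw [Function.comp_apply, norm_ofReal_mul_exp_I_mul hr]

end Ray

theorem pearcey_asymptotic_case1_general (x : ℂ) {β : ℝ} (hβ : β < 3 * π / 8) (N : ℕ) :
    (fun y : ℂ =>
        P x y * ((((2 : ℝ) ^ ((5 : ℝ) / 6) / Real.sqrt (π / 3) : ℝ)) : ℂ) * y ^ ((1 : ℂ) / 3) *
            Complex.exp
              (-3 * (4 : ℂ) ^ (-(4 : ℂ) / 3) * Complex.exp (2 * (π : ℂ) * Complex.I / 3) *
                  y ^ ((4 : ℂ) / 3)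
                + (4 : ℂ) ^ (-(2 : ℂ) / 3) * x * y ^ ((2 : ℂ) / 3) *
                  Complex.exp ((π : ℂ) * Complex.I / 3)
                - x ^ 2 / 6)
          - ∑ n ∈ Finset.range (N + 1),
              Complex.exp (-(2 * (n : ℂ) + 1) * (π : ℂ) * Complex.I / 6) * A x n *
                y ^ (-(2 * (n : ℂ)) / 3))
      =O[Bornology.cobounded ℂ ⊓ 𝓟 {y | |y.arg + π / 2| ≤ β}]
        fun y => ‖y‖ ^ (-(2 * ((N : ℝ) + 1)) / 3) := by
  have hsaddle :=
    ((isBigO_saddleIntegral_sub_sum x (α := 2 / 3 * β) (by linarith) (N + 1)).comp_tendsto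
      (tendsto_saddle_sq hβ)).const_mul_left
        (Complex.exp (π * Complex.I / 6) * (√(π / 6) * Complex.exp (x ^ 2 / 6)))⁻¹
  have hbound : (fun y => ‖saddle y ^ 2‖⁻¹ ^ (N + 1)) =O[Bornology.cobounded ℂ ⊓
      𝓟 {y | |y.arg + π / 2| ≤ β}] fun y => ‖y‖ ^ (-(2 * ((N : ℝ) + 1)) / 3) := by
    simp only [inv_norm_saddle_sq_pow, Nat.cast_succ]
    exact isBigO_const_mul_self _ _ _
  refine (hsaddle.trans hbound).congr' ?_ EventuallyEq.rfl
  filter_upwards [eventually_ne_zero_and_abs_arg_add_le β] with y ⟨hy, hsector⟩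
  simp only [normalized_P_eq x hy (hsector.trans_lt hβ), expansion_term_eq, ← Finset.mul_sum,
    Function.comp_apply, mul_sub, mul_inv_rev]
  field_simp

/-- Complete asymptotic expansion of `P(x,y)` for large `|y|` in the sector
`−π/2 ≤ arg y < −π/8` (case 1): only the saddle point `t₁` contributes. -/
theorem pearcey_asymptotic_case1 (x : ℂ) (θ : ℝ)
    (hθ : θ ∈ Set.Ico (-(π / 2)) (-(π / 8))) (N : ℕ) :
    (fun r : ℝ =>
        P x ((r : ℂ) * Complex.exp (Complex.I * (θ : ℂ))) *
            ((((2 : ℝ) ^ ((5 : ℝ) / 6) / Real.sqrt (π / 3) : ℝ)) : ℂ) *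
            ((r : ℂ) * Complex.exp (Complex.I * (θ : ℂ))) ^ ((1 : ℂ) / 3) *
            Complex.exp
              (-3 * (4 : ℂ) ^ (-(4 : ℂ) / 3) * Complex.exp (2 * (π : ℂ) * Complex.I / 3) *
                  ((r : ℂ) * Complex.exp (Complex.I * (θ : ℂ))) ^ ((4 : ℂ) / 3)
                + (4 : ℂ) ^ (-(2 : ℂ) / 3) * x *
                  ((r : ℂ) * Complex.exp (Complex.I * (θ : ℂ))) ^ ((2 : ℂ) / 3) *
                  Complex.exp ((π : ℂ) * Complex.I / 3)
                - x ^ 2 / 6)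
          - ∑ n ∈ Finset.range (N + 1),
              Complex.exp (-(2 * (n : ℂ) + 1) * (π : ℂ) * Complex.I / 6) * A x n *
                ((r : ℂ) * Complex.exp (Complex.I * (θ : ℂ))) ^ (-(2 * (n : ℂ)) / 3))
      =O[atTop] fun r : ℝ => r ^ (-(2 * ((N : ℝ) + 1)) / 3) := by
  have hsector : |θ + π / 2| < 3 * π / 8 :=
    abs_lt.2 (by constructor <;> linarith [hθ.1, hθ.2, pi_pos])
  exact isBigO_comp_ofReal_mul_exp_I_mul (p := fun t => |t + π / 2| ≤ |θ + π / 2|)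
    (g := fun r => r ^ (-(2 * ((N : ℝ) + 1)) / 3)) (pearcey_asymptotic_case1_general x hsector N)
    (by constructor <;> linarith [hθ.1, hθ.2, pi_pos]) le_rfl
end
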